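/- arXiv:2306.14863 — 3 statements merged into one kernel-verified Lean document; each statement's English description precedes it below -/
import Mathlib

section
/- Belk–Zaremsky: For every nonempty countable set S and every group G of permutations of S, the twisted Brin–Thompson group SV_G is a simple group. -/
/-- Concatenation of a finite word with an infinite sequence. -/
def wordAppend {A : Type*} (α : List A) (x : ℕ → A) : ℕ → A :=
  fun n => if h : n < α.length then α.get ⟨n, h⟩ else x (n - α.length)

/-- The cone determined by a finite word: all sequences having it as a prefix. -/
def cone {A : Type*} (α : List A) : Set (ℕ → A) := Set.range (wordAppend α)

/-- `g` is the local action of the homeomorphism `f` at the word `α`: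
there is a word `β` with `f (α ⌢ x) = β ⌢ (g x)` for all `x`, and `β` is the longest
common prefix of the image of the cone `C_α` (witnessed by two image points that
differ in the coordinate immediately after `β`). -/
def IsLocalAction {A : Type*} [TopologicalSpace A] (f : (ℕ → A) ≃ₜ (ℕ → A)) (α : List A)
    (g : (ℕ → A) → (ℕ → A)) : Prop :=
  ∃ β : List A, (∀ x, f (wordAppend α x) = wordAppend β (g x)) ∧ ∃ x y, g x 0 ≠ g y 0

/-- A homeomorphism of a Cantor space of sequences is rational if it has only
finitely many distinct local actions. -/
def IsRational {A : Type*} [TopologicalSpace A] (f : (ℕ → A) ≃ₜ (ℕ → A)) : Prop :=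
  {g | ∃ α, IsLocalAction f α g}.Finite

/-- The group of self-homeomorphisms of a topological space, under composition. -/
instance homeoGroup {X : Type*} [TopologicalSpace X] : Group (X ≃ₜ X) where
  mul f g := g.trans f
  one := Homeomorph.refl X
  inv := Homeomorph.symm
  mul_assoc _ _ _ := rfl
  one_mul _ := Homeomorph.ext fun _ => rfl
  mul_one _ := Homeomorph.ext fun _ => rfl
  inv_mul_cancel := Homeomorph.self_trans_symm

/-- Membership in Thompson's group `V` over the alphabet `A`: `f` carries a finite
partition of the space into cones onto another such partition by prefix replacement. -/
def InThompsonV {A : Type*} [TopologicalSpace A] (f : (ℕ → A) ≃ₜ (ℕ → A)) : Prop :=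
  ∃ (k : ℕ) (αs βs : Fin k → List A),
    (⋃ i, cone (αs i)) = Set.univ ∧ Pairwise (Function.onFun Disjoint (cone ∘ αs)) ∧
    (⋃ i, cone (βs i)) = Set.univ ∧ Pairwise (Function.onFun Disjoint (cone ∘ βs)) ∧
    ∀ i x, f (wordAppend (αs i) x) = wordAppend (βs i) x

/-- A homeomorphism is piecewise-`W` if some finite partition of the space into clopen
sets has `f` agreeing with a member of `W` on each piece. -/
def IsPiecewise {X : Type*} [TopologicalSpace X] (W : Set (X ≃ₜ X)) (f : X ≃ₜ X) : Prop :=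
  ∃ (k : ℕ) (P : Fin k → Set X), (∀ i, IsClopen (P i)) ∧ (⋃ i, P i) = Set.univ ∧
    Pairwise (Function.onFun Disjoint P) ∧ ∀ i, ∃ w ∈ W, ∀ x ∈ P i, f x = w x

/-- The set of homeomorphisms of `𝔠^S = S → (ℕ → Bool)` given by the natural action of
the restricted wreath product `W = (⊕_{s ∈ S} V) ⋊ G`: a finitely supported family of
elements of Thompson's group `V` acting coordinatewise, composed with a permutation
`σ ∈ G` of the coordinates. -/
def WreathSet (S : Type*) (G : Subgroup (Equiv.Perm S)) :
    Set ((S → ℕ → Bool) ≃ₜ (S → ℕ → Bool)) :=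
  {f | ∃ σ ∈ G, ∃ v : S → ((ℕ → Bool) ≃ₜ (ℕ → Bool)),
      (∀ s, InThompsonV (v s)) ∧
      {s | v s ≠ Homeomorph.refl (ℕ → Bool)}.Finite ∧
      ∀ (x : S → ℕ → Bool) (s : S), f x s = v s (x (σ⁻¹ s))}


namespace TBT

open Classical Topology

/-- Prepend a bit. -/
def bc (i : Bool) (z : ℕ → Bool) : ℕ → Bool
  | 0 => i
  | n + 1 => z n

/-- Remove the first bit. -/
def tl (z : ℕ → Bool) : ℕ → Bool := fun n => z (n + 1)

@[simp] theorem bc_zero (i z) : bc i z 0 = i := rfl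
@[simp] theorem bc_succ (i z n) : bc i z (n + 1) = z n := rfl
@[simp] theorem tl_bc (i z) : tl (bc i z) = z := rfl
theorem bc_tl (z) : bc (z 0) (tl z) = z := by
  funext n; cases n <;> rfl

theorem wa_nil (x : ℕ → Bool) : wordAppend [] x = x := by
  funext n; simp [wordAppend]

theorem wa_cons (i : Bool) (α : List Bool) (x : ℕ → Bool) :
    wordAppend (i :: α) x = bc i (wordAppend α x) := by
  funext n; cases n <;> simp [wordAppend]

theorem continuous_bc : Continuous (fun p : Bool × (ℕ → Bool) => bc p.1 p.2) := by
  refine continuous_pi fun n => ?_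
  cases n with
  | zero => exact continuous_fst
  | succ n => exact (continuous_apply n).comp continuous_snd

theorem continuous_tl : Continuous tl := continuous_pi fun n => continuous_apply (n + 1)

/-- The basic element of Thompson's group `V`. -/
def vfun (i j : Bool) (z : ℕ → Bool) : ℕ → Bool :=
  if z 0 = j then bc i z else if z 1 = false then bc i (bc (!j) (tl (tl z))) else bc (!i) (tl (tl z))

def vinv (i j : Bool) (z : ℕ → Bool) : ℕ → Bool :=
  if z 0 = i then (if z 1 = j then tl z else bc (!j) (bc false (tl (tl z))))
  else bc (!j) (bc true (tl z))

theorem cont_ite {Y : Type*} [TopologicalSpace Y] {n : ℕ} {b : Bool} {f g : (ℕ → Bool) → Y}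
    (hf : Continuous f) (hg : Continuous g) :
    Continuous (fun z : ℕ → Bool => if z n = b then f z else g z) := by
  have : IsClopen {z : ℕ → Bool | z n = b} :=
    (isClopen_discrete {b}).preimage (continuous_apply n)
  refine Continuous.if ?_ hf hg
  intro a ha
  rw [this.frontier_eq] at ha
  exact ha.elim

theorem continuous_vfun (i j) : Continuous (vfun i j) := by
  have hb : ∀ b, Continuous (bc b) := fun b => continuous_bc.comp (by fun_prop : Continuous fun z => (b, z))
  have ht := continuous_tl
  refine cont_ite (hb i) (cont_ite ?_ ?_)
  · exact (hb _).comp ((hb _).comp (ht.comp ht))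
  · exact (hb _).comp ((ht.comp ht))

theorem continuous_vinv (i j) : Continuous (vinv i j) := by
  have hb : ∀ b, Continuous (bc b) := fun b => continuous_bc.comp (by fun_prop : Continuous fun z => (b, z))
  have ht := continuous_tl
  refine cont_ite (cont_ite ht ?_) ?_
  · exact (hb _).comp ((hb _).comp (ht.comp ht))
  · exact (hb _).comp ((hb _).comp ht)

theorem bc_cases (z : ℕ → Bool) : ∃ i y, z = bc i y := ⟨z 0, tl z, (bc_tl z).symm⟩

theorem bc_one (i j z) : bc i (bc j z) 1 = j := rfl

def vh (i j : Bool) : (ℕ → Bool) ≃ₜ (ℕ → Bool) where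
  toFun := vfun i j
  invFun := vinv i j
  left_inv z := by
    obtain ⟨a, z, rfl⟩ := bc_cases z
    obtain ⟨b, z, rfl⟩ := bc_cases z
    cases i <;> cases j <;> cases a <;> cases b <;> simp [vfun, vinv, bc_one]
  right_inv z := by
    obtain ⟨a, z, rfl⟩ := bc_cases z
    obtain ⟨b, z, rfl⟩ := bc_cases z
    cases i <;> cases j <;> cases a <;> cases b <;> simp [vfun, vinv, bc_one]
  continuous_toFun := continuous_vfun i j
  continuous_invFun := continuous_vinv i j

theorem vh_apply (i j z) : vh i j z = vfun i j z := rfl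

theorem vh_inV (i j : Bool) : InThompsonV (vh i j) := by
  refine ⟨3, ![[j], [!j, false], [!j, true]], ![[i, j], [i, !j], [!i]], ?_, ?_, ?_, ?_, ?_⟩
  · rw [Set.eq_univ_iff_forall]
    intro z
    obtain ⟨a, z, rfl⟩ := bc_cases z
    obtain ⟨b, z, rfl⟩ := bc_cases z
    rw [Set.mem_iUnion]
    by_cases h : a = j
    · exact ⟨0, bc b z, by simp [wa_cons, wa_nil, h]⟩
    · have h : a = !j := by cases a <;> cases j <;> simp_all
      cases b
      · exact ⟨1, z, by simp [wa_cons, wa_nil, h]⟩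
      · exact ⟨2, z, by simp [wa_cons, wa_nil, h]⟩
  · intro a b hab
    rw [Function.onFun, Set.disjoint_left]
    rintro _ ⟨x, rfl⟩ ⟨y, hy⟩
    have h0 := congrFun hy 0
    have h1 := congrFun hy 1
    fin_cases a <;> fin_cases b <;> simp [wa_cons, wa_nil, bc_one] at hab h0 h1
  · rw [Set.eq_univ_iff_forall]
    intro z
    obtain ⟨a, z, rfl⟩ := bc_cases z
    rw [Set.mem_iUnion]
    by_cases h : a = i
    · obtain ⟨b, z, rfl⟩ := bc_cases z
      by_cases hb : b = j
      · exact ⟨0, z, by simp [wa_cons, wa_nil, h, hb]⟩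
      · have hb : b = !j := by cases b <;> cases j <;> simp_all
        exact ⟨1, z, by simp [wa_cons, wa_nil, h, hb]⟩
    · have h : a = !i := by cases a <;> cases i <;> simp_all
      exact ⟨2, z, by simp [wa_cons, wa_nil, h]⟩
  · intro a b hab
    rw [Function.onFun, Set.disjoint_left]
    rintro _ ⟨x, rfl⟩ ⟨y, hy⟩
    have h0 := congrFun hy 0
    have h1 := congrFun hy 1
    fin_cases a <;> fin_cases b <;> simp [wa_cons, wa_nil, bc_one] at hab h0 h1
  · intro k x
    fin_cases k <;> cases i <;> cases j <;> simp [wa_cons, wa_nil, vh_apply, vfun, bc_one]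

theorem refl_inV : InThompsonV (Homeomorph.refl (ℕ → Bool)) := by
  refine ⟨1, fun _ => [], fun _ => [], ?_, ?_, ?_, ?_, ?_⟩
  · rw [Set.eq_univ_iff_forall]; intro z; rw [Set.mem_iUnion]; exact ⟨0, z, wa_nil z⟩
  · intro a b hab; exact (hab (Subsingleton.elim _ _)).elim
  · rw [Set.eq_univ_iff_forall]; intro z; rw [Set.mem_iUnion]; exact ⟨0, z, wa_nil z⟩
  · intro a b hab; exact (hab (Subsingleton.elim _ _)).elim
  · intro i x; rfl

section

variable {S : Type}

/-- The coordinate bisection. -/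
noncomputable def e (s : S) (i : Bool) (x : S → ℕ → Bool) : S → ℕ → Bool :=
  Function.update x s (bc i (x s))

theorem mul_apply (f g : (S → ℕ → Bool) ≃ₜ (S → ℕ → Bool)) (x) : (f * g) x = f (g x) := rfl
theorem one_apply (x) : (1 : (S → ℕ → Bool) ≃ₜ (S → ℕ → Bool)) x = x := rfl
theorem inv_apply_self (f : (S → ℕ → Bool) ≃ₜ (S → ℕ → Bool)) (x) : f⁻¹ (f x) = x :=
  f.symm_apply_apply x
theorem apply_inv_self (f : (S → ℕ → Bool) ≃ₜ (S → ℕ → Bool)) (x) : f (f⁻¹ x) = x :=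
  f.apply_symm_apply x
theorem inv_eq_iff' (f : (S → ℕ → Bool) ≃ₜ (S → ℕ → Bool)) (x y) : f⁻¹ x = y ↔ f y = x := by
  constructor
  · rintro rfl; exact apply_inv_self f x
  · rintro rfl; exact inv_apply_self f y

noncomputable def phi (s : S) : (S → ℕ → Bool) ≃ₜ Bool × (S → ℕ → Bool) where
  toFun x := (x s 0, Function.update x s (tl (x s)))
  invFun p := e s p.1 p.2
  left_inv x := by simp [e, bc_tl]
  right_inv p := by simp [e]
  continuous_toFun := by
    refine Continuous.prodMk ((continuous_apply 0).comp (continuous_apply s)) ?_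
    exact continuous_id.update s (continuous_tl.comp (continuous_apply s))
  continuous_invFun := by
    refine Continuous.update continuous_snd s ?_
    exact continuous_bc.comp (continuous_fst.prodMk ((continuous_apply s).comp continuous_snd))

theorem phi_e (s : S) (i x) : phi s (e s i x) = (i, x) := (phi s).apply_symm_apply (i, x)
theorem phi_symm (s : S) (p) : (phi s).symm p = e s p.1 p.2 := rfl
theorem e_cases (s : S) (x : S → ℕ → Bool) : ∃ i y, x = e s i y :=
  ⟨_, _, ((phi s).symm_apply_apply x).symm⟩

@[simp] theorem e_inj {s : S} {i j x y} : e s i x = e s j y ↔ i = j ∧ x = y := by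
  rw [← phi_symm s (i, x), ← phi_symm s (j, y), (phi s).symm.injective.eq_iff, Prod.mk.injEq]

theorem e_comm {s t : S} (h : s ≠ t) (i j x) : e s i (e t j x) = e t j (e s i x) := by
  simp only [e, Function.update_of_ne h, Function.update_of_ne h.symm]
  rw [Function.update_comm h]

theorem continuous_e (s : S) (i) : Continuous (e s i) :=
  (phi s).symm.continuous.comp (by fun_prop : Continuous fun x : S → ℕ → Bool => (i, x))

theorem isClopen_range_e (s : S) (i) : IsClopen (Set.range (e s i)) := by
  have : Set.range (e s i) = (phi s) ⁻¹' (Prod.fst ⁻¹' {i}) := by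
    ext y
    obtain ⟨j, y, rfl⟩ := e_cases s y
    simp [phi_e, eq_comm]
  rw [this]
  exact ((isClopen_discrete {i}).preimage continuous_fst).preimage (phi s).continuous

/-- act by `g j` on the half `j`. -/
noncomputable def glue (s : S) (g : Bool → ((S → ℕ → Bool) ≃ₜ (S → ℕ → Bool))) :
    (S → ℕ → Bool) ≃ₜ (S → ℕ → Bool) :=
  ((phi s).trans
    { toFun := fun p : Bool × (S → ℕ → Bool) => (p.1, g p.1 p.2)
      invFun := fun p => (p.1, (g p.1).symm p.2)
      left_inv := fun p => by simp
      right_inv := fun p => by simp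
      continuous_toFun := by
        rw [continuous_prod_of_discrete_left]
        intro a
        exact continuous_const.prodMk (g a).continuous
      continuous_invFun := by
        rw [continuous_prod_of_discrete_left]
        intro a
        exact continuous_const.prodMk (g a).symm.continuous }).trans (phi s).symm

@[simp] theorem glue_e (s : S) (g j x) : glue s g (e s j x) = e s j (g j x) := by
  simp only [glue, Homeomorph.trans_apply, phi_e, phi_symm]
  rfl

noncomputable def tau (s : S) : (S → ℕ → Bool) ≃ₜ (S → ℕ → Bool) :=
  ((phi s).trans
    { toFun := fun p : Bool × (S → ℕ → Bool) => (!p.1, p.2)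
      invFun := fun p => (!p.1, p.2)
      left_inv := fun p => by simp
      right_inv := fun p => by simp
      continuous_toFun := by
        rw [continuous_prod_of_discrete_left]
        intro a
        fun_prop
      continuous_invFun := by
        rw [continuous_prod_of_discrete_left]
        intro a
        fun_prop }).trans (phi s).symm

@[simp] theorem tau_e (s : S) (j x) : tau s (e s j x) = e s (!j) x := by
  simp only [tau, Homeomorph.trans_apply, phi_e, phi_symm]
  rfl

noncomputable def pim (s t : S) : (S → ℕ → Bool) ≃ₜ (S → ℕ → Bool) := (phi s).trans (phi t).symm

@[simp] theorem pim_e (s t : S) (j x) : pim s t (e s j x) = e t j x := by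
  simp only [pim, Homeomorph.trans_apply, phi_e, phi_symm]

noncomputable def lift (s : S) (v : (ℕ → Bool) ≃ₜ (ℕ → Bool)) :
    (S → ℕ → Bool) ≃ₜ (S → ℕ → Bool) where
  toFun x := Function.update x s (v (x s))
  invFun x := Function.update x s (v.symm (x s))
  left_inv x := by simp
  right_inv x := by simp
  continuous_toFun := continuous_id.update s (v.continuous.comp (continuous_apply s))
  continuous_invFun := continuous_id.update s (v.symm.continuous.comp (continuous_apply s))

theorem lift_apply (s : S) (v x) : lift s v x = Function.update x s (v (x s)) := rfl

theorem lift_vh_e (s : S) (i j x) : lift s (vh i j) (e s j x) = e s i (e s j x) := by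
  simp [lift_apply, e, vh_apply, vfun]

noncomputable def xh (s : S) : (S → ℕ → Bool) ≃ₜ (S → ℕ → Bool) := lift s (vh false false)

@[simp] theorem xh_e0 (s : S) (x) : xh s (e s false x) = e s false (e s false x) := lift_vh_e s _ _ x
@[simp] theorem xh_e10 (s : S) (x) :
    xh s (e s true (e s false x)) = e s false (e s true x) := by
  simp [xh, lift_apply, e, vh_apply, vfun, bc_one]
@[simp] theorem xh_e11 (s : S) (x) : xh s (e s true (e s true x)) = e s true x := by
  simp [xh, lift_apply, e, vh_apply, vfun, bc_one]
@[simp] theorem xhi_e00 (s : S) (x) : (xh s).symm (e s false (e s false x)) = e s false x := by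
  refine (inv_eq_iff' _ _ _).2 ?_; simp
@[simp] theorem xhi_e01 (s : S) (x) :
    (xh s).symm (e s false (e s true x)) = e s true (e s false x) := by
  refine (inv_eq_iff' _ _ _).2 ?_; simp
@[simp] theorem xhi_e1 (s : S) (x) : (xh s).symm (e s true x) = e s true (e s true x) := by
  refine (inv_eq_iff' _ _ _).2 ?_; simp

def perm (σ : Equiv.Perm S) : (S → ℕ → Bool) ≃ₜ (S → ℕ → Bool) where
  toFun x := fun s => x (σ⁻¹ s)
  invFun x := fun s => x (σ s)
  left_inv x := by simp
  right_inv x := by simp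
  continuous_toFun := by fun_prop
  continuous_invFun := by fun_prop

theorem perm_apply (σ : Equiv.Perm S) (x s) : perm σ x s = x (σ⁻¹ s) := rfl

theorem perm_e (σ : Equiv.Perm S) (s i x) : perm σ (e s i x) = e (σ s) i (perm σ x) := by
  funext t
  by_cases h : t = σ s
  · subst h; simp [perm_apply, e]
  · have : σ⁻¹ t ≠ s := by rintro rfl; simp at h
    rw [perm_apply]
    simp only [e, Function.update_of_ne h, Function.update_of_ne this]
    rfl

/-- Words. -/
noncomputable def ew : List (S × Bool) → (S → ℕ → Bool) → (S → ℕ → Bool)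
  | [], x => x
  | a :: w, x => e a.1 a.2 (ew w x)

@[simp] theorem ew_nil (x : S → ℕ → Bool) : ew [] x = x := rfl
@[simp] theorem ew_cons (a) (w) (x : S → ℕ → Bool) : ew (a :: w) x = e a.1 a.2 (ew w x) := rfl
theorem ew_append (u w) (x : S → ℕ → Bool) : ew (u ++ w) x = ew u (ew w x) := by
  induction u with
  | nil => rfl
  | cons a u ih => simp [ih]

theorem ew_inj (w : List (S × Bool)) : Function.Injective (ew w) := by
  induction w with
  | nil => exact fun _ _ h => h
  | cons a w ih => intro x y h; exact ih (e_inj.1 h).2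

theorem perm_ew (σ : Equiv.Perm S) (w x) :
    perm σ (ew w x) = ew (w.map fun a => (σ a.1, a.2)) (perm σ x) := by
  induction w with
  | nil => rfl
  | cons a w ih => simp [perm_e, ih]

end

end TBT

namespace TBT

open Classical Topology

section

variable {S : Type}

theorem ew_map (t : S) (α : List Bool) (x : S → ℕ → Bool) :
    ew (α.map fun i => (t, i)) x = Function.update x t (wordAppend α (x t)) := by
  induction α with
  | nil => simp [wa_nil]
  | cons i α ih => simp [ih, e, wa_cons]

theorem ew_real (F : Finset S) (ψ : S → List Bool) :
    ∃ w : List (S × Bool), ∀ x s, ew w x s = if s ∈ F then wordAppend (ψ s) (x s) else x s := by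
  induction F using Finset.induction_on with
  | empty => exact ⟨[], by simp⟩
  | insert t F ht ih =>
    obtain ⟨w, hw⟩ := ih
    refine ⟨(ψ t).map (fun i => (t, i)) ++ w, fun x s => ?_⟩
    rw [ew_append, ew_map]
    by_cases h : s = t
    · subst h; simp [hw, ht]
    · simp [hw, h]

def pre : (ℕ → Bool) → ℕ → List Bool
  | _, 0 => []
  | z, n + 1 => z 0 :: pre (tl z) n

theorem pre_wa (α : List Bool) (z : ℕ → Bool) (n : ℕ) (h : α.length ≤ n) :
    pre (wordAppend α z) n = α ++ pre z (n - α.length) := by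
  induction α generalizing n with
  | nil => simp [wa_nil]
  | cons i α ih =>
    cases n with
    | zero => simp at h
    | succ n => simp [wa_cons, pre, ih n (by simpa using h)]

theorem wa_append (α β : List Bool) (z) : wordAppend (α ++ β) z = wordAppend α (wordAppend β z) := by
  induction α with
  | nil => simp [wa_nil]
  | cons i α ih => simp [wa_cons, ih]

theorem pre_drop (z : ℕ → Bool) (n) : wordAppend (pre z n) (fun k => z (n + k)) = z := by
  induction n generalizing z with
  | zero => simp [pre, wa_nil]
  | succ n ih =>
    simp only [pre, wa_cons]
    have := ih (tl z)
    conv_rhs => rw [← bc_tl z, ← this]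
    congr 2
    funext k
    simp only [tl]; congr 1; omega

theorem pre_get (z y : ℕ → Bool) (n k) (hk : k < n) : wordAppend (pre z n) y k = z k := by
  induction n generalizing z k with
  | zero => omega
  | succ n ih =>
    simp only [pre, wa_cons]
    cases k with
    | zero => rfl
    | succ k => exact ih (tl z) k (by omega)

theorem cantor_nhds {u : Set (ℕ → Bool)} (hu : IsOpen u) {y} (hy : y ∈ u) :
    ∃ n, ∀ x, (∀ k < n, x k = y k) → x ∈ u := by
  obtain ⟨J, v, hv, hJ⟩ := isOpen_pi_iff.1 hu y hy
  refine ⟨J.sup id + 1, fun x hx => hJ ?_⟩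
  intro k hk
  rw [hx k (Nat.lt_succ_of_le (Finset.le_sup (f := id) hk))]
  exact (hv k hk).2

theorem X_nhds {P : Set (S → ℕ → Bool)} (hP : IsOpen P) {y} (hy : y ∈ P) :
    ∃ (F : Finset S) (n : ℕ), ∀ x : S → ℕ → Bool, (∀ s ∈ F, ∀ k < n, x s k = y s k) → x ∈ P := by
  obtain ⟨J, v, hv, hJ⟩ := isOpen_pi_iff.1 hP y hy
  have : ∀ s, ∃ n, s ∈ J → ∀ x, (∀ k < n, x k = y s k) → x ∈ v s := by
    intro s
    by_cases hs : s ∈ J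
    · obtain ⟨n, hn⟩ := cantor_nhds (hv s hs).1 (hv s hs).2
      exact ⟨n, fun _ => hn⟩
    · exact ⟨0, fun h => (hs h).elim⟩
  choose n hn using this
  refine ⟨J, J.sup n, fun x hx => hJ fun s hs => hn s hs _ fun k hk => hx s hs k ?_⟩
  exact lt_of_lt_of_le hk (Finset.le_sup (f := n) hs)

theorem mem_ew_real {w : List (S × Bool)} {F : Finset S} {n : ℕ} {y : S → ℕ → Bool}
    (hw : ∀ x s, ew w x s = if s ∈ F then wordAppend (pre (y s) n) (x s) else x s) :
    y ∈ Set.range (ew w) := by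
  refine ⟨fun s => if s ∈ F then fun k => y s (n + k) else y s, ?_⟩
  funext s
  rw [hw]
  by_cases h : s ∈ F
  · simp [h, pre_drop]
  · simp [h]

theorem basis {P : Set (S → ℕ → Bool)} (hP : IsOpen P) {y} (hy : y ∈ P) :
    ∃ w : List (S × Bool), y ∈ Set.range (ew w) ∧ Set.range (ew w) ⊆ P := by
  obtain ⟨F, n, h⟩ := X_nhds hP hy
  obtain ⟨w, hw⟩ := ew_real F (fun s => pre (y s) n)
  refine ⟨w, mem_ew_real hw, ?_⟩
  rintro _ ⟨x, rfl⟩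
  apply h
  intro s hs k hk
  rw [hw, if_pos hs, pre_get _ _ _ _ hk]

theorem isOpen_range_ew (w : List (S × Bool)) : IsOpen (Set.range (ew w)) ∧ Continuous (ew w) := by
  have hc : ∀ w : List (S × Bool), Continuous (ew w) := by
    intro w
    induction w with
    | nil => exact continuous_id
    | cons a w ih => exact (continuous_e _ _).comp ih
  refine ⟨?_, hc w⟩
  have : IsOpenMap (ew w) := by
    induction w with
    | nil => exact IsOpenMap.id
    | cons a w ih =>
      refine IsOpenMap.comp (g := e a.1 a.2) (f := ew w) ?_ ih
      intro U hU
      have h2 : e a.1 a.2 '' U = phi a.1 ⁻¹' ({a.2} ×ˢ U) := by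
        ext y
        obtain ⟨j, y, rfl⟩ := e_cases a.1 y
        simp [phi_e, and_comm, eq_comm]
      rw [h2]
      exact ((isOpen_discrete _).prod hU).preimage (phi a.1).continuous
  exact this.isOpen_range

variable {G : Subgroup (Equiv.Perm S)} {Q : Subgroup ((S → ℕ → Bool) ≃ₜ (S → ℕ → Bool))}

theorem wreath_mem (hQ : ∀ f, f ∈ Q ↔ IsPiecewise (WreathSet S G) f) {w} (hw : w ∈ WreathSet S G) :
    w ∈ Q := by
  refine (hQ w).2 ⟨1, fun _ => Set.univ, fun _ => isClopen_univ, ?_, ?_, fun _ => ⟨w, hw, fun _ _ => rfl⟩⟩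
  · exact Set.iUnion_const _
  · intro a b hab; exact (hab (Subsingleton.elim _ _)).elim

theorem locally_wreath (hQ : ∀ f, f ∈ Q ↔ IsPiecewise (WreathSet S G) f) {f} (hf : f ∈ Q) (y) :
    ∃ U, IsClopen U ∧ y ∈ U ∧ ∃ w ∈ WreathSet S G, ∀ x ∈ U, f x = w x := by
  obtain ⟨k, P, hP, hU, -, hw⟩ := (hQ f).1 hf
  have : y ∈ ⋃ i, P i := hU ▸ Set.mem_univ y
  obtain ⟨i, hi⟩ := Set.mem_iUnion.1 this
  exact ⟨P i, hP i, hi, hw i⟩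

theorem mem_of_locally (hQ : ∀ f, f ∈ Q ↔ IsPiecewise (WreathSet S G) f)
    {f : (S → ℕ → Bool) ≃ₜ (S → ℕ → Bool)} (h : ∀ y, ∃ q ∈ Q, f =ᶠ[𝓝 y] q) : f ∈ Q := by
  have h1 : ∀ y, ∃ U, IsClopen U ∧ y ∈ U ∧ ∃ w ∈ WreathSet S G, ∀ x ∈ U, f x = w x := by
    intro y
    obtain ⟨q, hq, hfq⟩ := h y
    obtain ⟨U, hU, hy, w, hw, hqw⟩ := locally_wreath hQ hq y
    obtain ⟨O, hO, hOo, hyO⟩ := eventually_nhds_iff.1 hfq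
    obtain ⟨V, hV, hyV, hVO⟩ := compact_exists_isClopen_in_isOpen hOo hyO
    refine ⟨U ∩ V, hU.inter hV, ⟨hy, hyV⟩, w, hw, fun x hx => ?_⟩
    rw [hO x (hVO hx.2), hqw x hx.1]
  choose U hU hyU w hw hfw using h1
  obtain ⟨t, ht⟩ := CompactSpace.elim_nhds_subcover U (fun x => (hU x).isOpen.mem_nhds (hyU x))
  let c : Fin t.card → (S → ℕ → Bool) := fun i => (t.equivFin.symm i : S → ℕ → Bool)
  refine (hQ f).2 ⟨t.card, fun i => U (c i) \ ⋃ j ∈ {j | j < i}, U (c j), ?_, ?_, ?_, ?_⟩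
  · intro i
    refine (hU _).diff ?_
    exact (Set.toFinite _).isClopen_biUnion fun j _ => hU _
  · rw [Set.eq_univ_iff_forall]
    intro x
    have hx : ∃ i, x ∈ U (c i) := by
      have : x ∈ ⋃ x ∈ t, U x := ht ▸ Set.mem_univ x
      simp only [Set.mem_iUnion] at this
      obtain ⟨y, hy, hxy⟩ := this
      exact ⟨t.equivFin ⟨y, hy⟩, by simpa [c] using hxy⟩
    have hm := WellFounded.min_mem (wellFounded_lt (α := Fin t.card)) {i | x ∈ U (c i)} hx
    rw [Set.mem_iUnion]
    refine ⟨_, hm, ?_⟩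
    simp only [Set.mem_iUnion, not_exists]
    intro j hj hxj
    exact WellFounded.not_lt_min (wellFounded_lt (α := Fin t.card)) _ hxj hj
  · have key : ∀ i j, i < j → Disjoint (U (c i) \ ⋃ k ∈ {k | k < i}, U (c k))
        (U (c j) \ ⋃ k ∈ {k | k < j}, U (c k)) := by
      intro i j hij
      rw [Set.disjoint_left]
      rintro x ⟨hx, -⟩ ⟨-, hx'⟩
      exact hx' (Set.mem_biUnion (show i ∈ {k | k < j} from hij) hx)
    intro i j hij
    rcases lt_or_gt_of_ne hij with h | h
    · exact key i j h
    · exact (key j i h).symm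
  · intro i
    exact ⟨w (c i), hw _, fun x hx => hfw _ x hx.1⟩

/-- Maps that are locally given by elements of `Q`. -/
def LocQ (Q : Subgroup ((S → ℕ → Bool) ≃ₜ (S → ℕ → Bool)))
    (a : (S → ℕ → Bool) → (S → ℕ → Bool)) : Prop := ∀ x, ∃ q ∈ Q, a =ᶠ[𝓝 x] q

theorem LocQ.of_mem {q} (hq : q ∈ Q) : LocQ Q q := fun _ => ⟨q, hq, Filter.EventuallyEq.rfl⟩

theorem LocQ.comp {a b} (ha : LocQ Q a) (hb : LocQ Q b) : LocQ Q (fun x => a (b x)) := by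
  intro x
  obtain ⟨q, hq, h1⟩ := hb x
  obtain ⟨r, hr, h2⟩ := ha (q x)
  refine ⟨r * q, Q.mul_mem hr hq, ?_⟩
  filter_upwards [h1, q.continuous.continuousAt.eventually h2] with z hz1 hz2
  rw [hz1, hz2]; rfl

theorem LocQ.id' : LocQ Q (fun x => x) := fun _ => ⟨1, Q.one_mem, Filter.EventuallyEq.rfl⟩

theorem mem_crit (hQ : ∀ f, f ∈ Q ↔ IsPiecewise (WreathSet S G) f)
    {f : (S → ℕ → Bool) ≃ₜ (S → ℕ → Bool)}
    (h : ∀ y, ∃ a x, a x = y ∧ LocQ Q a ∧ LocQ Q (fun x => f (a x))) : f ∈ Q := by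
  apply mem_of_locally hQ
  intro y
  obtain ⟨a, x, rfl, ha, hfa⟩ := h y
  obtain ⟨q, hq, h1⟩ := ha x
  obtain ⟨r, hr, h2⟩ := hfa x
  refine ⟨r * q⁻¹, Q.mul_mem hr (Q.inv_mem hq), ?_⟩
  have hx : a x = q x := h1.self_of_nhds
  have hc : Filter.Tendsto (fun z => q⁻¹ z) (𝓝 (a x)) (𝓝 x) := by
    have := (q⁻¹).continuous.tendsto (a x)
    rwa [show q⁻¹ (a x) = x by rw [hx, inv_apply_self]] at this
  filter_upwards [hc.eventually h1, hc.eventually h2] with z hz1 hz2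
  rw [apply_inv_self] at hz1
  rw [hz1] at hz2
  exact hz2

theorem lift_mem (hQ : ∀ f, f ∈ Q ↔ IsPiecewise (WreathSet S G) f) (s : S) {v}
    (hv : InThompsonV v) : lift s v ∈ Q := by
  apply wreath_mem hQ
  refine ⟨1, G.one_mem, Function.update (fun _ => Homeomorph.refl _) s v, ?_, ?_, ?_⟩
  · intro t
    by_cases h : t = s
    · subst h; simpa using hv
    · simpa [h] using refl_inV
  · refine (Set.finite_singleton s).subset ?_
    intro t ht
    by_contra h
    apply ht
    rw [Function.update_of_ne h]
  · intro x t
    rw [lift_apply]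
    by_cases h : t = s
    · subst h; simp
    · simp [h]

theorem perm_mem (hQ : ∀ f, f ∈ Q ↔ IsPiecewise (WreathSet S G) f) {σ} (hσ : σ ∈ G) :
    perm σ ∈ Q := by
  apply wreath_mem hQ
  exact ⟨σ, hσ, fun _ => Homeomorph.refl _, fun _ => refl_inV, by simp, fun _ _ => rfl⟩

theorem LocQ.e (hQ : ∀ f, f ∈ Q ↔ IsPiecewise (WreathSet S G) f) (s : S) (i) : LocQ Q (e s i) := by
  intro x
  obtain ⟨j, x, rfl⟩ := e_cases s x
  refine ⟨lift s (vh i j), lift_mem hQ s (vh_inV i j), ?_⟩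
  filter_upwards [(isClopen_range_e s j).isOpen.mem_nhds ⟨x, rfl⟩]
  rintro _ ⟨z, rfl⟩
  rw [lift_vh_e]

theorem LocQ.ew (hQ : ∀ f, f ∈ Q ↔ IsPiecewise (WreathSet S G) f) (w : List (S × Bool)) :
    LocQ Q (ew w) := by
  induction w with
  | nil => exact LocQ.id'
  | cons a w ih => exact (LocQ.e hQ a.1 a.2).comp ih

theorem xh_mem (hQ : ∀ f, f ∈ Q ↔ IsPiecewise (WreathSet S G) f) (s : S) : xh s ∈ Q :=
  lift_mem hQ s (vh_inV _ _)

theorem glue_mem (hQ : ∀ f, f ∈ Q ↔ IsPiecewise (WreathSet S G) f) (s : S) {g} (hg : ∀ i, g i ∈ Q) :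
    glue s g ∈ Q := by
  apply mem_crit hQ
  intro y
  obtain ⟨j, x, rfl⟩ := e_cases s y
  refine ⟨e s j, x, rfl, LocQ.e hQ s j, ?_⟩
  simp only [glue_e]
  exact (LocQ.e hQ s j).comp (LocQ.of_mem (hg j))

theorem tau_mem (hQ : ∀ f, f ∈ Q ↔ IsPiecewise (WreathSet S G) f) (s : S) : tau s ∈ Q := by
  apply mem_crit hQ
  intro y
  obtain ⟨j, x, rfl⟩ := e_cases s y
  refine ⟨e s j, x, rfl, LocQ.e hQ s j, ?_⟩
  simp only [tau_e]
  exact LocQ.e hQ s _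

theorem pim_mem (hQ : ∀ f, f ∈ Q ↔ IsPiecewise (WreathSet S G) f) (s t : S) : pim s t ∈ Q := by
  apply mem_crit hQ
  intro y
  obtain ⟨j, x, rfl⟩ := e_cases s y
  refine ⟨e s j, x, rfl, LocQ.e hQ s j, ?_⟩
  simp only [pim_e]
  exact LocQ.e hQ t _

/-- The swap of a clopen set with its image. -/
noncomputable def swapfun (g : (S → ℕ → Bool) ≃ₜ (S → ℕ → Bool)) (D : Set (S → ℕ → Bool))
    (x : S → ℕ → Bool) : S → ℕ → Bool :=
  if x ∈ D then g x else if g⁻¹ x ∈ D then g⁻¹ x else x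

theorem swapfun_loc {g : (S → ℕ → Bool) ≃ₜ (S → ℕ → Bool)} {D : Set (S → ℕ → Bool)}
    (hg : g ∈ Q) (hD : IsClopen D) : LocQ Q (swapfun g D) := by
  intro x
  have hD2 : IsClopen ((fun z => g⁻¹ z) ⁻¹' D) := hD.preimage (g⁻¹).continuous
  by_cases h : x ∈ D
  · refine ⟨g, hg, ?_⟩
    filter_upwards [hD.isOpen.mem_nhds h] with z hz
    simp [swapfun, hz]
  · by_cases h2 : g⁻¹ x ∈ D
    · refine ⟨g⁻¹, Q.inv_mem hg, ?_⟩
      filter_upwards [hD.compl.isOpen.mem_nhds h, hD2.isOpen.mem_nhds h2] with z hz hz2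
      rw [swapfun, if_neg hz, if_pos (show g⁻¹ z ∈ D from hz2)]
    · refine ⟨1, Q.one_mem, ?_⟩
      filter_upwards [hD.compl.isOpen.mem_nhds h, hD2.compl.isOpen.mem_nhds h2] with z hz hz2
      rw [swapfun, if_neg hz, if_neg (show g⁻¹ z ∉ D from hz2)]; rfl

theorem exists_swap (hQ : ∀ f, f ∈ Q ↔ IsPiecewise (WreathSet S G) f)
    {g : (S → ℕ → Bool) ≃ₜ (S → ℕ → Bool)} {D : Set (S → ℕ → Bool)}
    (hg : g ∈ Q) (hD : IsClopen D) (hdis : ∀ x ∈ D, g x ∉ D) :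
    ∃ k ∈ Q, (∀ x ∈ D, k x = g x) ∧ (∀ x, x ∉ D → g⁻¹ x ∉ D → k x = x) := by
  have hinv : ∀ x, swapfun g D (swapfun g D x) = x := by
    intro x
    by_cases h : x ∈ D
    · rw [show swapfun g D x = g x by simp [swapfun, h], swapfun, if_neg (hdis x h),
        inv_apply_self, if_pos h]
    · by_cases h2 : g⁻¹ x ∈ D
      · rw [show swapfun g D x = g⁻¹ x by rw [swapfun, if_neg h, if_pos h2], swapfun, if_pos h2,
          apply_inv_self]
      · have : swapfun g D x = x := by rw [swapfun, if_neg h, if_neg h2]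
        rw [this, this]
  have hloc : LocQ Q (swapfun g D) := swapfun_loc hg hD
  have hcont : Continuous (swapfun g D) := by
    rw [continuous_iff_continuousAt]
    intro x
    obtain ⟨q, -, hq⟩ := hloc x
    exact q.continuous.continuousAt.congr hq.symm
  let k : (S → ℕ → Bool) ≃ₜ (S → ℕ → Bool) :=
    { toFun := swapfun g D
      invFun := swapfun g D
      left_inv := hinv
      right_inv := hinv
      continuous_toFun := hcont
      continuous_invFun := hcont }
  refine ⟨k, mem_of_locally hQ hloc, ?_, ?_⟩
  · intro x hx
    change swapfun g D x = g x
    simp [swapfun, hx]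
  · intro x hx hx2
    change swapfun g D x = x
    rw [swapfun, if_neg hx, if_neg hx2]

theorem locally_canonical (hQ : ∀ f, f ∈ Q ↔ IsPiecewise (WreathSet S G) f) {f} (hf : f ∈ Q) (y) :
    ∃ w w' : List (S × Bool), ∃ σ ∈ G, y ∈ Set.range (ew w) ∧
      ∀ x, f (ew w x) = ew w' (perm σ x) := by
  obtain ⟨P, hP, hyP, ω, ⟨σ, hσ, v, hv, hfin, hω⟩, hfω⟩ := locally_wreath hQ hf y
  have hv' : ∀ s, ∃ α β z, y (σ⁻¹ s) = wordAppend α z ∧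
      ∀ x, v s (wordAppend α x) = wordAppend β x := by
    intro s
    obtain ⟨k, αs, βs, hu, -, -, -, h⟩ := hv s
    have : y (σ⁻¹ s) ∈ ⋃ i, cone (αs i) := hu ▸ Set.mem_univ _
    obtain ⟨i, z, hz⟩ := Set.mem_iUnion.1 this
    exact ⟨αs i, βs i, z, hz.symm, h i⟩
  choose α β z hyz hvαβ using hv'
  obtain ⟨F, n, hFn⟩ := X_nhds hP.isOpen hyP
  set A := hfin.toFinset with hA
  have hAv : ∀ s, s ∉ A → v s = Homeomorph.refl _ := by
    intro s hs
    by_contra h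
    exact hs (hfin.mem_toFinset.2 h)
  let N := max n (A.sup fun s => (α s).length)
  let F2 := F ∪ A.image (fun s => σ⁻¹ s)
  obtain ⟨w, hw⟩ := ew_real F2 (fun s => pre (y s) N)
  obtain ⟨w', hw'⟩ := ew_real (F2.image σ) (fun s => if s ∈ A then
    β s ++ pre (z s) (N - (α s).length) else pre (y (σ⁻¹ s)) N)
  refine ⟨w, w', σ, hσ, mem_ew_real hw, fun x => ?_⟩
  rw [hfω]
  · funext s
    rw [hω, hw, hw', perm_apply]
    have hmem : s ∈ F2.image σ ↔ σ⁻¹ s ∈ F2 := by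
      rw [Finset.mem_image]
      constructor
      · rintro ⟨t, ht, rfl⟩; simpa using ht
      · intro h; exact ⟨_, h, by simp⟩
    by_cases hs : s ∈ A
    · have h1 : σ⁻¹ s ∈ F2 := Finset.mem_union_right _ (Finset.mem_image_of_mem _ hs)
      rw [if_pos h1, if_pos (hmem.2 h1), if_pos hs, hyz, pre_wa, wa_append, wa_append, hvαβ]
      exact le_trans (Finset.le_sup (f := fun s => (α s).length) hs) (le_max_right _ _)
    · rw [hAv s hs, if_neg hs]
      simp only [hmem]
      rfl
  · apply hFn
    intro s hs k hk
    rw [hw, if_pos (Finset.mem_union_left _ hs), pre_get _ _ _ _ (lt_of_lt_of_le hk (le_max_left _ _))]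

end

end TBT

namespace TBT

open Classical Topology

section

variable {S : Type}
variable {G : Subgroup (Equiv.Perm S)} {Q : Subgroup ((S → ℕ → Bool) ≃ₜ (S → ℕ → Bool))}

theorem brick_trans (hQ : ∀ f, f ∈ Q ↔ IsPiecewise (WreathSet S G) f) (s₀ : S)
    (w : List (S × Bool)) (hw : w ≠ []) : ∃ q ∈ Q, ∀ x, q (ew w x) = e s₀ false x := by
  have hflip : ∀ i, ∃ q ∈ Q, ∀ x, q (e s₀ i x) = e s₀ false x := by
    intro i
    cases i
    · exact ⟨1, Q.one_mem, fun x => rfl⟩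
    · exact ⟨tau s₀, tau_mem hQ s₀, fun x => by simp⟩
  have hone : ∀ a : S × Bool, ∃ q ∈ Q, ∀ x, q (e a.1 a.2 x) = e s₀ false x := by
    intro a
    obtain ⟨q, hq, h⟩ := hflip a.2
    exact ⟨q * pim a.1 s₀, Q.mul_mem hq (pim_mem hQ _ _), fun x => by rw [mul_apply, pim_e, h]⟩
  induction w with
  | nil => exact (hw rfl).elim
  | cons a w ih =>
    obtain ⟨q, hq, h⟩ := hone a
    by_cases hw' : w = []
    · subst hw'; exact ⟨q, hq, h⟩
    · obtain ⟨r, hr, hr'⟩ := ih hw'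
      refine ⟨(xh s₀)⁻¹ * q * glue a.1 (fun _ => r), Q.mul_mem (Q.mul_mem (Q.inv_mem (xh_mem hQ s₀)) hq)
        (glue_mem hQ _ fun _ => hr), fun x => ?_⟩
      rw [mul_apply, mul_apply, ew_cons, glue_e, hr', h]
      exact xhi_e00 s₀ x

theorem brick_in [Nonempty S] {O : Set (S → ℕ → Bool)} (hO : IsOpen O) (hne : O.Nonempty) :
    ∃ w : List (S × Bool), w ≠ [] ∧ Set.range (ew w) ⊆ O := by
  obtain ⟨y, hy⟩ := hne
  obtain ⟨w, -, hw⟩ := basis hO hy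
  refine ⟨w ++ [(Classical.arbitrary S, false)], by simp, ?_⟩
  rintro _ ⟨x, rfl⟩
  rw [ew_append]
  exact hw ⟨_, rfl⟩

theorem compress [Nonempty S] (hQ : ∀ f, f ∈ Q ↔ IsPiecewise (WreathSet S G) f)
    {D U : Set (S → ℕ → Bool)}
    (hD : IsOpen D) (hDn : D.Nonempty) (hU : IsOpen U) (hUn : U.Nonempty) :
    ∃ t ∈ Q, ∀ x, x ∉ D → t x ∈ U := by
  obtain ⟨w, hw, hwD⟩ := brick_in hD hDn
  obtain ⟨u, hu, huU⟩ := brick_in hU hUn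
  let s₀ : S := Classical.arbitrary S
  obtain ⟨q, hq, hqw⟩ := brick_trans hQ s₀ w hw
  obtain ⟨r, hr, hru⟩ := brick_trans hQ s₀ u hu
  refine ⟨r⁻¹ * tau s₀ * q, Q.mul_mem (Q.mul_mem (Q.inv_mem hr) (tau_mem hQ _)) hq, fun x hx => ?_⟩
  obtain ⟨j, y, hy⟩ := e_cases s₀ (q x)
  have hj : j = true := by
    cases j
    · exfalso
      rw [← hqw] at hy
      rw [q.injective hy] at hx
      exact hx (hwD ⟨_, rfl⟩)
    · rfl
  subst hj
  apply huU
  refine ⟨y, ?_⟩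
  rw [mul_apply, mul_apply, hy, tau_e, eq_comm, inv_eq_iff', hru]
  rfl

theorem displaced {M : Subgroup ((S → ℕ → Bool) ≃ₜ (S → ℕ → Bool))}
    (hM : ∀ m ∈ M, ∀ q ∈ Q, q * m * q⁻¹ ∈ M) {U : Set (S → ℕ → Bool)} {n a b}
    (hn : n ∈ M) (ha : a ∈ Q) (hb : b ∈ Q) (hnU : ∀ z ∈ U, n z ∉ U)
    (haU : ∀ z, z ∉ U → a z = z) (hbU : ∀ z, z ∉ U → b z = z) : a * b * a⁻¹ * b⁻¹ ∈ M := by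
  set d := n * a⁻¹ * n⁻¹ with hd
  have hdU : ∀ z ∈ U, d z = z := by
    intro z hz
    have h1 : n⁻¹ z ∉ U := by
      intro h
      have := hnU _ h
      rw [apply_inv_self] at this
      exact this hz
    have h2 : a⁻¹ (n⁻¹ z) = n⁻¹ z := by rw [inv_eq_iff', haU _ h1]
    rw [hd, mul_apply, mul_apply, h2, apply_inv_self]
  have hcomm : d * b = b * d := by
    apply Homeomorph.ext
    intro z
    change d (b z) = b (d z)
    by_cases hz : z ∈ U
    · rw [hdU z hz]
      apply hdU
      by_contra h
      have := b.injective (hbU _ h)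
      rw [this] at h
      exact h hz
    · rw [hbU z hz]
      rw [hbU]
      intro h
      have := d.injective (hdU _ h)
      rw [this] at h
      exact hz h
  have hc : a * d ∈ M := by
    have : a * d = (a * n * a⁻¹) * n⁻¹ := by rw [hd]; group
    rw [this]
    exact M.mul_mem (hM n hn a ha) (M.inv_mem hn)
  have : a * b * a⁻¹ * b⁻¹ = (a * d) * (b * (a * d)⁻¹ * b⁻¹) := by
    have h2 : (a * d) * (b * (a * d)⁻¹ * b⁻¹) = a * (d * b) * d⁻¹ * a⁻¹ * b⁻¹ := by group
    rw [h2, hcomm]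
    group
  rw [this]
  exact M.mul_mem hc (hM _ (M.inv_mem hc) b hb)

theorem comm_small [Nonempty S] (hQ : ∀ f, f ∈ Q ↔ IsPiecewise (WreathSet S G) f)
    {M : Subgroup ((S → ℕ → Bool) ≃ₜ (S → ℕ → Bool))}
    (hM : ∀ m ∈ M, ∀ q ∈ Q, q * m * q⁻¹ ∈ M) {n} (hn : n ∈ M) (hn1 : n ≠ 1) {f g}
    (hf : f ∈ Q) (hg : g ∈ Q) {D : Set (S → ℕ → Bool)} (hD : IsOpen D) (hDn : D.Nonempty)
    (hfD : ∀ z ∈ D, f z = z) (hgD : ∀ z ∈ D, g z = z) : f * g * f⁻¹ * g⁻¹ ∈ M := by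
  have : ∃ x, n x ≠ x := by
    by_contra h
    push Not at h
    exact hn1 (Homeomorph.ext h)
  obtain ⟨x, hx⟩ := this
  obtain ⟨V', V, hV', hV, hxV', hxV, hdis⟩ := t2_separation hx
  let U := V ∩ n ⁻¹' V'
  have hU : IsOpen U := hV.inter (hV'.preimage n.continuous)
  obtain ⟨t, ht, htU⟩ := compress hQ hD hDn hU ⟨x, hxV, hxV'⟩
  have hfix : ∀ f : (S → ℕ → Bool) ≃ₜ (S → ℕ → Bool), (∀ z ∈ D, f z = z) →
      ∀ z, z ∉ U → (t * f * t⁻¹) z = z := by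
    intro f hf z hz
    have : t⁻¹ z ∈ D := by
      by_contra h
      have := htU _ h
      rw [apply_inv_self] at this
      exact hz this
    rw [mul_apply, mul_apply, hf _ this, apply_inv_self]
  have h := displaced (U := U) hM hn (Q.mul_mem (Q.mul_mem ht hf) (Q.inv_mem ht))
    (Q.mul_mem (Q.mul_mem ht hg) (Q.inv_mem ht)) (fun z hz hz' => Set.disjoint_left.1 hdis hz.2 hz'.1)
    (hfix f hfD) (hfix g hgD)
  have h2 := hM _ h t⁻¹ (Q.inv_mem ht)
  have h3 : f * g * f⁻¹ * g⁻¹ = t⁻¹ * (t * f * t⁻¹ * (t * g * t⁻¹) * (t * f * t⁻¹)⁻¹ * (t * g * t⁻¹)⁻¹) * t⁻¹⁻¹ := by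
    group
  rw [h3]; exact h2

theorem infinite_X [Nonempty S] : Infinite (S → ℕ → Bool) := by
  refine Infinite.of_injective (fun (n : ℕ) (_ : S) (k : ℕ) => decide (k = n)) ?_
  intro a b h
  have := congrFun (congrFun h (Classical.arbitrary S)) a
  simpa using this

theorem decomp [Nonempty S] (hQ : ∀ f, f ∈ Q ↔ IsPiecewise (WreathSet S G) f) {g} (hg : g ∈ Q)
    {O : Set (S → ℕ → Bool)} (hO : IsOpen O) (hOn : O.Nonempty) :
    ∃ k ∈ Q, ∃ g' ∈ Q, g = k * g' ∧
      (∃ D ⊆ O, IsOpen D ∧ D.Nonempty ∧ ∀ z ∈ D, g' z = z) ∧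
      (∃ D ⊆ O, IsOpen D ∧ D.Nonempty ∧ ∀ z ∈ D, k z = z) := by
  by_cases hid : ∀ z ∈ O, g z = z
  · exact ⟨1, Q.one_mem, g, hg, (one_mul g).symm, ⟨O, subset_rfl, hO, hOn, hid⟩,
      ⟨O, subset_rfl, hO, hOn, fun _ _ => rfl⟩⟩
  push Not at hid
  obtain ⟨q, hqO, hq⟩ := hid
  obtain ⟨w, -, hw⟩ := brick_in hO hOn
  have := infinite_X (S := S)
  have hinf : (Set.range (ew w)).Infinite := Set.infinite_range_of_injective (ew_inj w)
  obtain ⟨r, hr, hr'⟩ := (hinf.sdiff (Set.toFinite {q, g q})).nonempty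
  have hrO : r ∈ O := hw hr
  simp only [Set.mem_insert_iff, Set.mem_singleton_iff, not_or] at hr'
  obtain ⟨V', V, hV', hV, hqV', hqV, hdis⟩ := t2_separation hq
  have hopen : IsOpen (O ∩ {r}ᶜ ∩ g ⁻¹' {r}ᶜ ∩ (V ∩ g ⁻¹' V')) :=
    ((hO.inter isOpen_compl_singleton).inter (isOpen_compl_singleton.preimage g.continuous)).inter
      (hV.inter (hV'.preimage g.continuous))
  obtain ⟨D, hD, hqD, hDsub⟩ := compact_exists_isClopen_in_isOpen hopen
    (show q ∈ _ from ⟨⟨⟨hqO, fun h => hr'.1 h.symm⟩, fun h => hr'.2 h.symm⟩, hqV, hqV'⟩)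
  obtain ⟨k, hk, hkD, hk2⟩ := exists_swap hQ hg hD
    (fun x hx hx' => Set.disjoint_left.1 hdis (hDsub hx).2.2 (hDsub hx').2.1)
  refine ⟨k, hk, k⁻¹ * g, Q.mul_mem (Q.inv_mem hk) hg, by group, ?_, ?_⟩
  · refine ⟨D, fun x hx => (hDsub hx).1.1.1, hD.isOpen, ⟨q, hqD⟩, fun z hz => ?_⟩
    rw [mul_apply, inv_eq_iff', hkD z hz]
  · refine ⟨O ∩ Dᶜ ∩ (fun z => g⁻¹ z) ⁻¹' Dᶜ, fun x hx => hx.1.1, ?_, ⟨r, ⟨hrO, ?_⟩, ?_⟩, ?_⟩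
    · exact (hO.inter hD.compl.isOpen).inter (hD.compl.isOpen.preimage (g⁻¹).continuous)
    · exact fun h => (hDsub h).1.1.2 rfl
    · intro h
      apply (hDsub h).1.2
      exact apply_inv_self g r
    · intro z hz
      exact hk2 z hz.1.2 hz.2

theorem comm_mem [Nonempty S] (hQ : ∀ f, f ∈ Q ↔ IsPiecewise (WreathSet S G) f)
    {M : Subgroup ((S → ℕ → Bool) ≃ₜ (S → ℕ → Bool))}
    (hM : ∀ m ∈ M, ∀ q ∈ Q, q * m * q⁻¹ ∈ M) {n} (hn : n ∈ M) (hn1 : n ≠ 1) {f g}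
    (hf : f ∈ Q) (hg : g ∈ Q) : f * g * f⁻¹ * g⁻¹ ∈ M := by
  have key : ∀ f ∈ Q, ∀ g ∈ Q, (∃ O, IsOpen O ∧ O.Nonempty ∧ ∀ z ∈ O, f z = z) →
      f * g * f⁻¹ * g⁻¹ ∈ M := by
    rintro f hf g hg ⟨O, hO, hOn, hfO⟩
    obtain ⟨k, hk, g', hg', rfl, ⟨D1, hD1, hD1o, hD1n, h1⟩, ⟨D2, hD2, hD2o, hD2n, h2⟩⟩ :=
      decomp hQ hg hO hOn
    have e1 := comm_small hQ hM hn hn1 hf hg' hD1o hD1n (fun z hz => hfO z (hD1 hz)) h1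
    have e2 := comm_small hQ hM hn hn1 hf hk hD2o hD2n (fun z hz => hfO z (hD2 hz)) h2
    have : f * (k * g') * f⁻¹ * (k * g')⁻¹ =
      (f * k * f⁻¹ * k⁻¹) * (k * (f * g' * f⁻¹ * g'⁻¹) * k⁻¹) := by group
    rw [this]
    exact M.mul_mem e2 (hM _ e1 k hk)
  obtain ⟨k, hk, f', hf', rfl, ⟨D1, hD1, hD1o, hD1n, h1⟩, ⟨D2, hD2, hD2o, hD2n, h2⟩⟩ :=
    decomp hQ hf isOpen_univ Set.univ_nonempty
  have e1 := key f' hf' g hg ⟨D1, hD1o, hD1n, h1⟩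
  have e2 := key k hk g hg ⟨D2, hD2o, hD2n, h2⟩
  have : k * f' * g * (k * f')⁻¹ * g⁻¹ =
    (k * (f' * g * f'⁻¹ * g⁻¹) * k⁻¹) * (k * g * k⁻¹ * g⁻¹) := by group
  rw [this]
  exact M.mul_mem (hM _ e1 k hk) e2

end

end TBT
namespace TBT

open Classical Topology

section

variable {S : Type}
variable {G : Subgroup (Equiv.Perm S)} {Q : Subgroup ((S → ℕ → Bool) ≃ₜ (S → ℕ → Bool))}

theorem ext_e (s : S) {f g : (S → ℕ → Bool) ≃ₜ (S → ℕ → Bool)}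
    (h : ∀ i x, f (e s i x) = g (e s i x)) : f = g := by
  apply Homeomorph.ext
  intro x
  obtain ⟨i, x, rfl⟩ := e_cases s x
  exact h i x

theorem inv_symm (f : (S → ℕ → Bool) ≃ₜ (S → ℕ → Bool)) (x) : f⁻¹ x = f.symm x := rfl

/-- The action supported on one half. -/
noncomputable def iot (s : S) (i : Bool) :
    ((S → ℕ → Bool) ≃ₜ (S → ℕ → Bool)) →* ((S → ℕ → Bool) ≃ₜ (S → ℕ → Bool)) where
  toFun g := glue s (fun j => if j = i then g else 1)
  map_one' := by
    apply ext_e s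
    intro j x
    rw [glue_e]
    split_ifs <;> rfl
  map_mul' f g := by
    apply ext_e s
    intro j x
    rw [mul_apply, glue_e, glue_e, glue_e]
    split_ifs <;> rfl

theorem iot_e (s : S) (i j g x) : iot s i g (e s j x) = e s j (if j = i then g x else x) := by
  refine (glue_e _ _ _ _).trans ?_
  split_ifs <;> rfl

@[simp] theorem iot_same (s : S) (i g x) : iot s i g (e s i x) = e s i (g x) := by simp [iot_e]
@[simp] theorem iot_ft (s : S) (g x) : iot s false g (e s true x) = e s true x := by simp [iot_e]
@[simp] theorem iot_tf (s : S) (g x) : iot s true g (e s false x) = e s false x := by simp [iot_e]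

theorem iot_mem (hQ : ∀ f, f ∈ Q ↔ IsPiecewise (WreathSet S G) f) (s : S) (i) {g} (hg : g ∈ Q) :
    iot s i g ∈ Q := by
  have : iot s i g = glue s (fun j => if j = i then g else 1) := rfl
  rw [this]
  refine glue_mem hQ s (fun j => ?_)
  split_ifs
  · exact hg
  · exact Q.one_mem

theorem iot_comm (hQ : ∀ f, f ∈ Q ↔ IsPiecewise (WreathSet S G) f) (s : S) (i) {g}
    (hg : g ∈ (⁅Q, Q⁆ : Subgroup _)) : iot s i g ∈ (⁅Q, Q⁆ : Subgroup _) := by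
  have h1 : iot s i g ∈ (⁅Q, Q⁆ : Subgroup _).map (iot s i) := ⟨g, hg, rfl⟩
  rw [Subgroup.map_commutator] at h1
  have h2 : Q.map (iot s i) ≤ Q := by
    rintro _ ⟨a, ha, rfl⟩
    exact iot_mem hQ s i ha
  exact Subgroup.commutator_mono h2 h2 h1

theorem glue_eq (s : S) (g) : glue s g = iot s false (g false) * iot s true (g true) := by
  apply ext_e s
  intro j x
  rw [mul_apply]
  cases j <;> simp

theorem glue_comm (hQ : ∀ f, f ∈ Q ↔ IsPiecewise (WreathSet S G) f) (s : S) {g}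
    (hg : ∀ i, g i ∈ (⁅Q, Q⁆ : Subgroup _)) : glue s g ∈ (⁅Q, Q⁆ : Subgroup _) := by
  rw [glue_eq]
  exact Subgroup.mul_mem _ (iot_comm hQ s _ (hg _)) (iot_comm hQ s _ (hg _))

/-- Abelianization, extended by `1` outside of the group. -/
noncomputable def ab (Q : Subgroup ((S → ℕ → Bool) ≃ₜ (S → ℕ → Bool)))
    (g : (S → ℕ → Bool) ≃ₜ (S → ℕ → Bool)) : Abelianization ↥Q :=
  if h : g ∈ Q then Abelianization.of ⟨g, h⟩ else 1

theorem ab_mul {f g} (hf : f ∈ Q) (hg : g ∈ Q) : ab Q (f * g) = ab Q f * ab Q g := by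
  rw [ab, ab, ab, dif_pos hf, dif_pos hg, dif_pos (Q.mul_mem hf hg), ← map_mul]
  rfl

theorem ab_inv {f} (hf : f ∈ Q) : ab Q f⁻¹ = (ab Q f)⁻¹ := by
  rw [ab, ab, dif_pos hf, dif_pos (Q.inv_mem hf), ← map_inv]
  rfl

theorem ab_conj {f q} (hf : f ∈ Q) (hq : q ∈ Q) : ab Q (q * f * q⁻¹) = ab Q f := by
  rw [ab_mul (Q.mul_mem hq hf) (Q.inv_mem hq), ab_mul hq hf, ab_inv hq, mul_comm (ab Q q),
    mul_inv_cancel_right]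

theorem ab_conj' {f q} (hf : f ∈ Q) (hq : q ∈ Q) : ab Q (q⁻¹ * f * q) = ab Q f := by
  have := ab_conj hf (Q.inv_mem hq)
  rwa [inv_inv] at this

theorem ab_iff {g} (hg : g ∈ Q) : ab Q g = 1 ↔ g ∈ (⁅Q, Q⁆ : Subgroup _) := by
  rw [ab, dif_pos hg, ← Subgroup.map_subtype_commutator, ← MonoidHom.mem_ker, Abelianization.ker_of]
  constructor
  · intro h; exact ⟨_, h, rfl⟩
  · rintro ⟨a, ha, rfl⟩; exact ha

theorem conj_comm {g q} (hg : g ∈ (⁅Q, Q⁆ : Subgroup _)) (hq : q ∈ Q) :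
    q * g * q⁻¹ ∈ (⁅Q, Q⁆ : Subgroup _) := by
  have hgQ : g ∈ Q := Subgroup.commutator_le_self Q hg
  rw [← ab_iff (Q.mul_mem (Q.mul_mem hq hgQ) (Q.inv_mem hq)), ab_conj hgQ hq, ab_iff hgQ]
  exact hg

theorem ab_tau_iot (hQ : ∀ f, f ∈ Q ↔ IsPiecewise (WreathSet S G) f) (s : S) {g} (hg : g ∈ Q) :
    ab Q (iot s true g) = ab Q (iot s false g) := by
  have : iot s true g = tau s * iot s false g * (tau s)⁻¹ := by
    rw [eq_mul_inv_iff_mul_eq]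
    apply ext_e s
    intro j x
    rw [mul_apply, mul_apply]
    cases j <;> simp
  rw [this, ab_conj (iot_mem hQ s _ hg) (tau_mem hQ s)]

theorem ab_xh_iot (hQ : ∀ f, f ∈ Q ↔ IsPiecewise (WreathSet S G) f) (s : S) {g} (hg : g ∈ Q) :
    ab Q (iot s false (iot s false g)) = ab Q (iot s false g) := by
  have : iot s false (iot s false g) = xh s * iot s false g * (xh s)⁻¹ := by
    rw [eq_mul_inv_iff_mul_eq]
    apply ext_e s
    intro j x
    rw [mul_apply, mul_apply]
    cases j
    · simp
    · obtain ⟨i, x, rfl⟩ := e_cases s x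
      cases i <;> simp
  rw [this, ab_conj (iot_mem hQ s _ hg) (xh_mem hQ s)]

theorem double (hQ : ∀ f, f ∈ Q ↔ IsPiecewise (WreathSet S G) f) (s : S) {g} (hg : g ∈ Q)
    (h : ab Q (glue s fun _ => g) = ab Q g) : g ∈ (⁅Q, Q⁆ : Subgroup _) := by
  have hi : ∀ i, iot s i g ∈ Q := fun i => iot_mem hQ s i hg
  have hE : glue s (fun _ => g) ∈ Q := glue_mem hQ s fun _ => hg
  have h1 : ab Q g = ab Q (iot s false g) * ab Q (iot s false g) := by
    rw [← h, glue_eq, ab_mul (hi _) (hi _), ab_tau_iot hQ s hg]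
  have h2 : g⁻¹ * glue s (fun _ => g) ∈ (⁅Q, Q⁆ : Subgroup _) := by
    rw [← ab_iff (Q.mul_mem (Q.inv_mem hg) hE), ab_mul (Q.inv_mem hg) hE, h, ab_inv hg,
      inv_mul_cancel]
  have h3 := iot_comm hQ s false h2
  rw [map_mul, map_inv, ← ab_iff (Q.mul_mem (Q.inv_mem (hi _)) (iot_mem hQ _ _ hE)),
    ab_mul (Q.inv_mem (hi _)) (iot_mem hQ _ _ hE), ab_inv (hi _), glue_eq, map_mul,
    ab_mul (iot_mem hQ _ _ (hi _)) (iot_mem hQ _ _ (hi _)), ab_xh_iot hQ s hg] at h3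
  have h4 : ab Q (iot s false (iot s true g)) = ab Q (iot s false g) := by
    have : iot s false (iot s true g)
        = iot s false (tau s) * iot s false (iot s false g) * (iot s false (tau s))⁻¹ := by
      rw [← map_inv, ← map_mul, ← map_mul]
      congr 1
      rw [eq_mul_inv_iff_mul_eq]
      apply ext_e s
      intro j x
      rw [mul_apply, mul_apply]
      cases j <;> simp
    rw [this, ab_conj (iot_mem hQ _ _ (hi _)) (iot_mem hQ _ _ (tau_mem hQ s)), ab_xh_iot hQ s hg]
  rw [h4, inv_mul_cancel_left] at h3
  rw [← ab_iff hg, h1, h3, mul_one]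

noncomputable def yh (s : S) : (S → ℕ → Bool) ≃ₜ (S → ℕ → Bool) :=
  (xh s)⁻¹ * iot s false (tau s) * xh s

@[simp] theorem yh_e0 (s : S) (x) : yh s (e s false x) = e s true (e s false x) := by
  simp [yh]
@[simp] theorem yh_e10 (s : S) (x) : yh s (e s true (e s false x)) = e s false x := by
  simp [yh]
@[simp] theorem yh_e11 (s : S) (x) : yh s (e s true (e s true x)) = e s true (e s true x) := by
  simp [yh]

noncomputable def dh (s : S) : (S → ℕ → Bool) ≃ₜ (S → ℕ → Bool) :=
  xh s * iot s true (yh s) * (xh s)⁻¹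

@[simp] theorem dh_e (s : S) (i j x) : dh s (e s i (e s j x)) = e s j (e s i x) := by
  cases i
  · cases j <;> simp [dh]
  · cases j
    · have h : e s true (e s false x) = xh s (e s true (e s true (e s false x))) := by simp
      simp [dh]
    · simp [dh]

theorem yh_mem (hQ : ∀ f, f ∈ Q ↔ IsPiecewise (WreathSet S G) f) (s : S) : yh s ∈ Q :=
  Q.mul_mem (Q.mul_mem (Q.inv_mem (xh_mem hQ s)) (iot_mem hQ _ _ (tau_mem hQ s))) (xh_mem hQ s)

theorem dh_mem (hQ : ∀ f, f ∈ Q ↔ IsPiecewise (WreathSet S G) f) (s : S) : dh s ∈ Q :=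
  Q.mul_mem (Q.mul_mem (xh_mem hQ s) (iot_mem hQ _ _ (yh_mem hQ s))) (Q.inv_mem (xh_mem hQ s))

theorem tau_comm (hQ : ∀ f, f ∈ Q ↔ IsPiecewise (WreathSet S G) f) (s : S) :
    tau s ∈ (⁅Q, Q⁆ : Subgroup _) := by
  apply double hQ s (tau_mem hQ s)
  have : (glue s fun _ => tau s) = dh s * tau s * (dh s)⁻¹ := by
    rw [eq_mul_inv_iff_mul_eq]
    apply ext_e s
    intro j x
    obtain ⟨i, x, rfl⟩ := e_cases s x
    rw [mul_apply, mul_apply]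
    simp
  rw [this, ab_conj (tau_mem hQ s) (dh_mem hQ s)]

theorem yh_comm (hQ : ∀ f, f ∈ Q ↔ IsPiecewise (WreathSet S G) f) (s : S) :
    yh s ∈ (⁅Q, Q⁆ : Subgroup _) := by
  have := conj_comm (iot_comm hQ s false (tau_comm hQ s)) (Q.inv_mem (xh_mem hQ s))
  rwa [inv_inv] at this

theorem dh_comm (hQ : ∀ f, f ∈ Q ↔ IsPiecewise (WreathSet S G) f) (s : S) :
    dh s ∈ (⁅Q, Q⁆ : Subgroup _) :=
  conj_comm (iot_comm hQ s true (yh_comm hQ s)) (xh_mem hQ s)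

theorem xh_comm (hQ : ∀ f, f ∈ Q ↔ IsPiecewise (WreathSet S G) f) (s : S) :
    xh s ∈ (⁅Q, Q⁆ : Subgroup _) := by
  have : xh s = iot s false (tau s) * tau s * yh s * tau s * iot s false (tau s) * tau s * yh s := by
    apply ext_e s
    intro j x
    simp only [mul_apply]
    cases j
    · simp
    · obtain ⟨i, x, rfl⟩ := e_cases s x
      cases i <;> simp
  rw [this]
  have ht := tau_comm hQ s
  have hi := iot_comm hQ s false ht
  have hy := yh_comm hQ s
  exact mul_mem (mul_mem (mul_mem (mul_mem (mul_mem (mul_mem hi ht) hy) ht) hi) ht) hy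

theorem pim_comm (hQ : ∀ f, f ∈ Q ↔ IsPiecewise (WreathSet S G) f) (s t : S) :
    pim s t ∈ (⁅Q, Q⁆ : Subgroup _) := by
  by_cases hst : s = t
  · subst hst
    have : pim s s = 1 := by
      apply ext_e s
      intro j x
      rw [pim_e]; rfl
    rw [this]
    exact one_mem _
  · have hp := pim_mem hQ s t
    apply double hQ s hp
    have : pim s t = (glue s fun _ => pim s t) * dh s := by
      apply ext_e s
      intro j x
      obtain ⟨i, x, rfl⟩ := e_cases s x
      rw [mul_apply]
      simp [e_comm hst]
    have h2 := congrArg (ab Q) this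
    rw [ab_mul (glue_mem hQ s fun _ => hp) (dh_mem hQ s), (ab_iff (dh_mem hQ s)).2 (dh_comm hQ s),
      mul_one] at h2
    exact h2.symm

theorem perm_comm [Nonempty S] (hQ : ∀ f, f ∈ Q ↔ IsPiecewise (WreathSet S G) f) {σ} (hσ : σ ∈ G) :
    perm σ ∈ (⁅Q, Q⁆ : Subgroup _) := by
  obtain ⟨s⟩ := ‹Nonempty S›
  have hp := perm_mem hQ hσ
  apply double hQ s hp
  have : (glue s fun _ => perm σ) = pim (σ s) s * perm σ := by
    apply ext_e s
    intro j x
    rw [mul_apply, perm_e]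
    simp
  rw [this, ab_mul (pim_mem hQ _ _) hp, (ab_iff (pim_mem hQ _ _)).2 (pim_comm hQ _ _), one_mul]

end

end TBT
namespace TBT

open Classical Topology

section

variable {S : Type}
variable {G : Subgroup (Equiv.Perm S)} {Q : Subgroup ((S → ℕ → Bool) ≃ₜ (S → ℕ → Bool))}

/-- Finite binary trees labelled by `S`. -/
inductive Tr (S : Type) : Type
  | leaf : Tr S
  | node (s : S) (c : Bool → Tr S) : Tr S

/-- The bricks of a tree. -/
def Lv : Tr S → Set ((S → ℕ → Bool) → (S → ℕ → Bool))
  | .leaf => {b | b = fun x => x}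
  | .node s c => {b | ∃ i, ∃ a ∈ Lv (c i), b = fun x => e s i (a x)}

theorem mem_leaf {b : (S → ℕ → Bool) → (S → ℕ → Bool)} : b ∈ Lv (Tr.leaf : Tr S) ↔ b = fun x => x := Iff.rfl
theorem mem_node {s : S} {c b} : b ∈ Lv (Tr.node s c) ↔ ∃ i, ∃ a ∈ Lv (c i), b = fun x => e s i (a x) := Iff.rfl

def Rel (Q : Subgroup ((S → ℕ → Bool) ≃ₜ (S → ℕ → Bool))) (A B : Tr S) : Prop :=
  ∃ q ∈ (⁅Q, Q⁆ : Subgroup _), ∀ a, a ∈ Lv A ↔ (fun x => q (a x)) ∈ Lv B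

theorem Rel.mk' {A B : Tr S} {q : (S → ℕ → Bool) ≃ₜ (S → ℕ → Bool)}
    (r : (S → ℕ → Bool) ≃ₜ (S → ℕ → Bool))
    (hq : q ∈ (⁅Q, Q⁆ : Subgroup _)) (hr : ∀ x, r (q x) = x)
    (h1 : ∀ a ∈ Lv A, (fun x => q (a x)) ∈ Lv B) (h2 : ∀ b ∈ Lv B, (fun x => r (b x)) ∈ Lv A) :
    Rel Q A B := by
  refine ⟨q, hq, fun a => ⟨h1 a, fun h => ?_⟩⟩
  have := h2 _ h
  simpa only [hr] using this

theorem Rel.refl (A : Tr S) : Rel Q A A := ⟨1, one_mem _, fun _ => Iff.rfl⟩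

theorem Rel.symm {A B : Tr S} (h : Rel Q A B) : Rel Q B A := by
  obtain ⟨q, hq, h⟩ := h
  refine ⟨q⁻¹, inv_mem hq, fun a => ?_⟩
  rw [h]
  simp only [apply_inv_self]

theorem Rel.trans {A B C : Tr S} (h : Rel Q A B) (h' : Rel Q B C) : Rel Q A C := by
  obtain ⟨q, hq, h⟩ := h
  obtain ⟨r, hr, h'⟩ := h'
  exact ⟨r * q, mul_mem hr hq, fun a => by rw [h, h']; rfl⟩

theorem Rel.node (hQ : ∀ f, f ∈ Q ↔ IsPiecewise (WreathSet S G) f) (s : S) {c d : Bool → Tr S}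
    (h : ∀ i, Rel Q (c i) (d i)) : Rel Q (.node s c) (.node s d) := by
  choose q hq h using h
  refine Rel.mk' (glue s fun i => (q i)⁻¹) (glue_comm hQ s hq) ?_ ?_ ?_
  · intro x
    obtain ⟨i, x, rfl⟩ := e_cases s x
    rw [glue_e, glue_e, inv_apply_self]
  · rintro _ ⟨i, a, ha, rfl⟩
    refine ⟨i, _, (h i a).1 ha, ?_⟩
    funext x
    rw [glue_e]
  · rintro _ ⟨i, a, ha, rfl⟩
    refine ⟨i, fun x => (q i)⁻¹ (a x), ?_, ?_⟩
    · rw [h]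
      simpa only [apply_inv_self] using ha
    · funext x
      rw [glue_e]

theorem Rel.pim (hQ : ∀ f, f ∈ Q ↔ IsPiecewise (WreathSet S G) f) (s t : S) (c : Bool → Tr S) :
    Rel Q (.node s c) (.node t c) := by
  refine Rel.mk' (TBT.pim t s) (pim_comm hQ s t) ?_ ?_ ?_
  · intro x
    obtain ⟨i, x, rfl⟩ := e_cases s x
    rw [pim_e, pim_e]
  · rintro _ ⟨i, a, ha, rfl⟩
    exact ⟨i, a, ha, by funext x; rw [pim_e]⟩
  · rintro _ ⟨i, a, ha, rfl⟩
    exact ⟨i, a, ha, by funext x; rw [pim_e]⟩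

def nd (s : S) (L R : Tr S) : Tr S := .node s (fun i => cond i R L)

theorem mem_nd {s : S} {L R b} : b ∈ Lv (nd s L R) ↔
    (∃ a ∈ Lv L, b = fun x => e s false (a x)) ∨ ∃ a ∈ Lv R, b = fun x => e s true (a x) := by
  rw [nd, mem_node]
  simp only [Bool.exists_bool, cond_true, cond_false]

theorem Rel.assoc (hQ : ∀ f, f ∈ Q ↔ IsPiecewise (WreathSet S G) f) (s : S) (A B C : Tr S) :
    Rel Q (nd s A (nd s B C)) (nd s (nd s A B) C) := by
  refine Rel.mk' (xh s).symm (xh_comm hQ s) (fun x => (xh s).symm_apply_apply x) ?_ ?_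
  · intro b hb
    simp only [mem_nd] at hb ⊢
    rcases hb with ⟨a, ha, rfl⟩ | ⟨_, ⟨a, ha, rfl⟩ | ⟨a, ha, rfl⟩, rfl⟩
    · exact Or.inl ⟨_, Or.inl ⟨a, ha, rfl⟩, by simp⟩
    · exact Or.inl ⟨_, Or.inr ⟨a, ha, rfl⟩, by simp⟩
    · exact Or.inr ⟨a, ha, by simp⟩
  · intro b hb
    simp only [mem_nd] at hb ⊢
    rcases hb with ⟨_, ⟨a, ha, rfl⟩ | ⟨a, ha, rfl⟩, rfl⟩ | ⟨a, ha, rfl⟩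
    · exact Or.inl ⟨a, ha, by simp⟩
    · exact Or.inr ⟨_, Or.inl ⟨a, ha, rfl⟩, by simp⟩
    · exact Or.inr ⟨_, Or.inr ⟨a, ha, rfl⟩, by simp⟩

def comb (s : S) : ℕ → Tr S
  | 0 => .leaf
  | n + 1 => nd s .leaf (comb s n)

theorem Rel.nd (hQ : ∀ f, f ∈ Q ↔ IsPiecewise (WreathSet S G) f) (s : S) {A B A' B' : Tr S}
    (h : Rel Q A A') (h' : Rel Q B B') : Rel Q (nd s A B) (nd s A' B') := by
  apply Rel.node hQ
  intro i
  cases i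
  · exact h
  · exact h'

theorem Rel.comb (hQ : ∀ f, f ∈ Q ↔ IsPiecewise (WreathSet S G) f) (s : S) (a b : ℕ) :
    Rel Q (TBT.nd s (comb s a) (comb s b)) (comb s (a + b + 1)) := by
  induction a with
  | zero => rw [Nat.zero_add]; exact Rel.refl _
  | succ a ih =>
    refine (Rel.assoc hQ s _ _ _).symm.trans ?_
    have h : a + 1 + b + 1 = (a + b + 1) + 1 := by omega
    rw [h]
    exact Rel.nd hQ s (Rel.refl _) ih

theorem Rel.exists_comb (hQ : ∀ f, f ∈ Q ↔ IsPiecewise (WreathSet S G) f) (s₀ : S) (A : Tr S) :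
    ∃ n, Rel Q A (TBT.comb s₀ n) := by
  induction A with
  | leaf => exact ⟨0, Rel.refl _⟩
  | node s c ih =>
    choose n hn using ih
    refine ⟨n false + n true + 1, ?_⟩
    refine (Rel.pim hQ s s₀ c).trans (Rel.trans ?_ (Rel.comb hQ s₀ _ _))
    apply Rel.node hQ
    intro i
    cases i
    · exact hn false
    · exact hn true

theorem comb_trans (hQ : ∀ f, f ∈ Q ↔ IsPiecewise (WreathSet S G) f) (s : S) (n : ℕ) :
    ∀ a ∈ Lv (comb s (n + 1)), ∃ p ∈ (⁅Q, Q⁆ : Subgroup _),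
      (∀ b ∈ Lv (comb s (n + 1)), (fun x => p (b x)) ∈ Lv (comb s (n + 1))) ∧
      ∀ x, p (a x) = e s false x := by
  induction n with
  | zero =>
    intro a ha
    simp only [comb, mem_nd, mem_leaf] at ha
    rcases ha with ⟨a, rfl, rfl⟩ | ⟨a, rfl, rfl⟩
    · exact ⟨1, one_mem _, fun b hb => hb, fun x => rfl⟩
    · refine ⟨tau s, tau_comm hQ s, ?_, fun x => by simp⟩
      intro b hb
      simp only [comb, mem_nd, mem_leaf] at hb ⊢
      rcases hb with ⟨a, rfl, rfl⟩ | ⟨a, rfl, rfl⟩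
      · exact Or.inr ⟨_, rfl, by simp⟩
      · exact Or.inl ⟨_, rfl, by simp⟩
  | succ n ih =>
    intro a ha
    rw [comb, mem_nd] at ha
    rcases ha with ⟨a, ha, rfl⟩ | ⟨a, ha, rfl⟩
    · rw [mem_leaf] at ha
      subst ha
      exact ⟨1, one_mem _, fun b hb => hb, fun x => rfl⟩
    · obtain ⟨p, hp, h1, h2⟩ := ih a ha
      refine ⟨yh s * iot s true p, mul_mem (yh_comm hQ s) (iot_comm hQ s true hp), ?_, ?_⟩
      · have hA : ∀ b ∈ Lv (comb s (n + 1 + 1)),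
            (fun x => iot s true p (b x)) ∈ Lv (comb s (n + 1 + 1)) := by
          intro b hb
          rw [comb, mem_nd] at hb ⊢
          rcases hb with ⟨a, ha, rfl⟩ | ⟨a, ha, rfl⟩
          · exact Or.inl ⟨a, ha, by simp⟩
          · exact Or.inr ⟨_, h1 a ha, by simp⟩
        have hB : ∀ b ∈ Lv (comb s (n + 1 + 1)),
            (fun x => yh s (b x)) ∈ Lv (comb s (n + 1 + 1)) := by
          intro b hb
          simp only [comb, mem_nd, mem_leaf] at hb ⊢
          rcases hb with ⟨a, rfl, rfl⟩ | ⟨_, ⟨a, rfl, rfl⟩ | ⟨a, ha, rfl⟩, rfl⟩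
          · exact Or.inr ⟨_, Or.inl ⟨_, rfl, rfl⟩, by simp⟩
          · exact Or.inl ⟨_, rfl, by simp⟩
          · exact Or.inr ⟨_, Or.inr ⟨_, ha, rfl⟩, by simp⟩
        intro b hb
        exact hB _ (hA b hb)
      · intro x
        rw [mul_apply, iot_same, h2, yh_e10]

theorem claim [Nonempty S] (hQ : ∀ f, f ∈ Q ↔ IsPiecewise (WreathSet S G) f) (s : S) (n : ℕ) :
    ∀ (m : ℕ) (f : (S → ℕ → Bool) ≃ₜ (S → ℕ → Bool)),
      (∀ k ∈ Lv (comb s n), ∃ k' ∈ Lv (comb s m), ∃ σ ∈ G, ∀ x, f (k x) = k' (perm σ x)) →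
      f ∈ (⁅Q, Q⁆ : Subgroup _) := by
  induction n with
  | zero =>
    intro m f h
    obtain ⟨k', hk', σ, hσ, h⟩ := h _ (mem_leaf.2 rfl)
    cases m with
    | zero =>
      have hk : k' = fun x => x := hk'
      subst hk
      have : f = perm σ := Homeomorph.ext h
      rw [this]
      exact perm_comm hQ hσ
    | succ m =>
      rw [comb, nd, mem_node] at hk'
      obtain ⟨i, a, -, rfl⟩ := hk'
      obtain ⟨x, hx⟩ := f.surjective (e s (!i) fun _ _ => false)
      rw [h, e_inj] at hx
      cases i <;> simp at hx
  | succ n ih =>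
    intro m f h
    have h0 : (fun x => e s false x) ∈ Lv (comb s (n + 1)) := by
      rw [comb, mem_nd]
      exact Or.inl ⟨_, rfl, rfl⟩
    cases m with
    | zero =>
      obtain ⟨k', hk', σ, hσ, h⟩ := h _ h0
      have hk : k' = fun x => x := hk'
      subst hk
      obtain ⟨x, hx⟩ := (perm σ).surjective (f (e s true fun _ _ => false))
      have := f.injective ((h x).trans hx)
      simp at this
    | succ m =>
      obtain ⟨k', hk', σ, hσ, hf⟩ := h _ h0
      obtain ⟨p, hp, hp1, hp2⟩ := comb_trans hQ s m k' hk'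
      set F := p * f with hF
      have hF0 : ∀ x, F (e s false x) = e s false (perm σ x) := by
        intro x
        rw [hF, mul_apply, hf, hp2]
      have hF1 : ∀ x, ∃ z, F (e s true x) = e s true z := by
        intro x
        obtain ⟨i, z, hz⟩ := e_cases s (F (e s true x))
        cases i
        · obtain ⟨y, rfl⟩ := (perm σ).surjective z
          rw [← hF0] at hz
          have := F.injective hz
          simp at this
        · exact ⟨z, hz⟩
      choose g hg using hF1
      have hgc : Continuous g := by
        have : g = fun x => (phi s (F (e s true x))).2 := by
          funext x
          rw [hg, phi_e]
        rw [this]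
        exact continuous_snd.comp ((phi s).continuous.comp (F.continuous.comp (continuous_e s true)))
      have hgb : Function.Bijective g := by
        constructor
        · intro x y hxy
          have : F (e s true x) = F (e s true y) := by rw [hg, hg, hxy]
          exact (e_inj.1 (F.injective this)).2
        · intro y
          obtain ⟨x, hx⟩ := F.surjective (e s true y)
          obtain ⟨i, z, rfl⟩ := e_cases s x
          cases i
          · rw [hF0] at hx
            simp at hx
          · rw [hg] at hx
            exact ⟨z, (e_inj.1 hx).2⟩
      let gh : (S → ℕ → Bool) ≃ₜ (S → ℕ → Bool) :=
        Continuous.homeoOfEquivCompactToT2 (f := Equiv.ofBijective g hgb) hgc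
      have hgh : ∀ x, gh x = g x := fun x => rfl
      have hghD : gh ∈ (⁅Q, Q⁆ : Subgroup _) := by
        apply ih m
        intro k hk
        obtain ⟨k₂, hk₂, ρ, hρ, h3⟩ := h (fun x => e s true (k x))
          (by rw [comb, mem_nd]; exact Or.inr ⟨k, hk, rfl⟩)
        have h4 := hp1 k₂ hk₂
        rw [comb, mem_nd] at h4
        have h5 : ∀ x, e s true (g (k x)) = p (k₂ (perm ρ x)) := by
          intro x
          rw [← hg, hF, mul_apply, h3]
        rcases h4 with ⟨a, ha, h6⟩ | ⟨a, ha, h6⟩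
        · have h7 := h5 fun _ _ => false
          rw [congrFun h6] at h7
          simp at h7
        · refine ⟨a, ha, ρ, hρ, fun x => ?_⟩
          have h7 := h5 x
          rw [congrFun h6] at h7
          rw [hgh]
          exact (e_inj.1 h7).2
      have hFe : F = glue s (fun i => cond i gh (perm σ)) := by
        apply ext_e s
        intro i x
        rw [glue_e]
        cases i
        · exact hF0 x
        · exact hg x
      have hFD : F ∈ (⁅Q, Q⁆ : Subgroup _) := by
        rw [hFe]
        apply glue_comm hQ
        intro i
        cases i
        · exact perm_comm hQ hσ
        · exact hghD
      have : f = p⁻¹ * F := by rw [hF, inv_mul_cancel_left]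
      rw [this]
      exact mul_mem (inv_mem hp) hFD

theorem claim_tree [Nonempty S] (hQ : ∀ f, f ∈ Q ↔ IsPiecewise (WreathSet S G) f) (A B : Tr S)
    (f : (S → ℕ → Bool) ≃ₜ (S → ℕ → Bool))
    (h : ∀ k ∈ Lv A, ∃ k' ∈ Lv B, ∃ σ ∈ G, ∀ x, f (k x) = k' (perm σ x)) :
    f ∈ (⁅Q, Q⁆ : Subgroup _) := by
  obtain ⟨s⟩ := ‹Nonempty S›
  have : Nonempty S := ⟨s⟩
  obtain ⟨n, q, hq, h1⟩ := Rel.exists_comb hQ s A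
  obtain ⟨m, r, hr, h2⟩ := Rel.exists_comb hQ s B
  have h3 : r * f * q⁻¹ ∈ (⁅Q, Q⁆ : Subgroup _) := by
    apply claim hQ s n m
    intro k hk
    obtain ⟨k', hk', σ, hσ, h4⟩ := h (fun x => q⁻¹ (k x)) (by
      rw [h1]; simpa only [apply_inv_self] using hk)
    refine ⟨_, (h2 k').1 hk', σ, hσ, fun x => ?_⟩
    rw [mul_apply, mul_apply, h4]
  have : f = r⁻¹ * (r * f * q⁻¹) * q := by group
  rw [this]
  exact mul_mem (mul_mem (inv_mem hr) h3) hq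

end

end TBT
namespace TBT

open Classical Topology

section

variable {S : Type}
variable {G : Subgroup (Equiv.Perm S)} {Q : Subgroup ((S → ℕ → Bool) ≃ₜ (S → ℕ → Bool))}

/-- The complete tree with prescribed splitting coordinates. -/
def grid : List S → Tr S
  | [] => .leaf
  | s :: l => .node s (fun _ => grid l)

theorem mem_grid (l : List S) (b) :
    b ∈ Lv (grid l) ↔ ∃ w : List (S × Bool), w.map Prod.fst = l ∧ b = ew w := by
  induction l generalizing b with
  | nil =>
    rw [grid, mem_leaf]
    constructor
    · rintro rfl; exact ⟨[], rfl, rfl⟩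
    · rintro ⟨w, hw, rfl⟩
      rw [List.map_eq_nil_iff] at hw
      subst hw; rfl
  | cons s l ih =>
    rw [grid, mem_node]
    simp only [ih]
    constructor
    · rintro ⟨i, _, ⟨w, rfl, rfl⟩, rfl⟩
      exact ⟨(s, i) :: w, rfl, rfl⟩
    · rintro ⟨w, hw, rfl⟩
      rw [List.map_eq_cons_iff] at hw
      obtain ⟨a, w, rfl, rfl, rfl⟩ := hw
      exact ⟨a.2, _, ⟨w, rfl, rfl⟩, rfl⟩

theorem word_cover (l : List S) (y : S → ℕ → Bool) :
    ∃ w : List (S × Bool), w.map Prod.fst = l ∧ ∃ x, y = ew w x := by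
  induction l generalizing y with
  | nil => exact ⟨[], rfl, y, rfl⟩
  | cons s l ih =>
    obtain ⟨i, y, rfl⟩ := e_cases s y
    obtain ⟨w, rfl, x, rfl⟩ := ih y
    exact ⟨(s, i) :: w, rfl, x, rfl⟩

theorem word_disj (w r : List (S × Bool)) (h : w.map Prod.fst = r.map Prod.fst)
    {x y} (hxy : ew w x = ew r y) : w = r := by
  induction w generalizing r with
  | nil => exact (List.map_eq_nil_iff.1 h.symm).symm
  | cons a w ih =>
    cases r with
    | nil => simp at h
    | cons b r =>
      obtain ⟨a1, a2⟩ := a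
      obtain ⟨b1, b2⟩ := b
      simp only [List.map_cons, List.cons.injEq] at h
      obtain ⟨rfl, h⟩ := h
      simp only [ew_cons, e_inj] at hxy
      obtain ⟨rfl, hxy⟩ := hxy
      rw [ih r h hxy]

theorem reorder {l l' : List S} (h : l.Perm l') : ∀ w : List (S × Bool), w.map Prod.fst = l →
    ∃ r : List (S × Bool), r.map Prod.fst = l' ∧ ∀ x, ew r x = ew w x := by
  induction h with
  | nil => intro w hw; exact ⟨w, hw, fun _ => rfl⟩
  | cons s h ih =>
    intro w hw
    rw [List.map_eq_cons_iff] at hw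
    obtain ⟨a, w, rfl, rfl, hw⟩ := hw
    obtain ⟨r, rfl, hr⟩ := ih w hw
    exact ⟨a :: r, rfl, fun x => by rw [ew_cons, ew_cons, hr]⟩
  | swap s t l =>
    intro w hw
    rw [List.map_eq_cons_iff] at hw
    obtain ⟨a, w, rfl, rfl, hw⟩ := hw
    rw [List.map_eq_cons_iff] at hw
    obtain ⟨b, w, rfl, rfl, rfl⟩ := hw
    by_cases hab : a.1 = b.1
    · exact ⟨a :: b :: w, by simp [hab], fun x => rfl⟩
    · exact ⟨b :: a :: w, by simp, fun x => by simp [e_comm hab]⟩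
  | trans _ _ ih1 ih2 =>
    intro w hw
    obtain ⟨r, hr, h1⟩ := ih1 w hw
    obtain ⟨r', hr', h2⟩ := ih2 r hr
    exact ⟨r', hr', fun x => by rw [h2, h1]⟩

theorem common {α : Type*} (t : Finset α) (L : α → List S) :
    ∃ l : List S, ∀ a ∈ t, ∃ m, l.Perm (L a ++ m) := by
  induction t using Finset.induction_on with
  | empty => exact ⟨[], by simp⟩
  | insert b t _ ih =>
    obtain ⟨l, hl⟩ := ih
    refine ⟨L b ++ l, fun a ha => ?_⟩
    rw [Finset.mem_insert] at ha
    rcases ha with rfl | ha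
    · exact ⟨l, List.Perm.refl _⟩
    · obtain ⟨m, hm⟩ := hl a ha
      exact ⟨L b ++ m, (hm.append_left (L b)).trans (List.perm_append_comm_assoc _ _ _)⟩

theorem common_word (l : List S) (L : List (S × Bool) → List S) :
    ∃ l' : List S, ∀ w, w.map Prod.fst = l → ∃ m, l'.Perm (L w ++ m) := by
  induction l generalizing L with
  | nil =>
    refine ⟨L [], fun w hw => ⟨[], ?_⟩⟩
    rw [List.map_eq_nil_iff] at hw
    subst hw
    simp
  | cons s l ih =>
    have h1 : ∀ i, ∃ l' : List S, ∀ w, w.map Prod.fst = l → ∃ m, l'.Perm (L ((s, i) :: w) ++ m) :=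
      fun i => ih fun w => L ((s, i) :: w)
    choose l' hl' using h1
    obtain ⟨k, hk⟩ := common Finset.univ l'
    refine ⟨k, fun w hw => ?_⟩
    rw [List.map_eq_cons_iff] at hw
    obtain ⟨⟨s', i⟩, w, rfl, rfl, hw⟩ := hw
    obtain ⟨m, hm⟩ := hl' i w hw
    obtain ⟨m', hm'⟩ := hk i (Finset.mem_univ i)
    refine ⟨m ++ m', hm'.trans ?_⟩
    rw [← List.append_assoc]
    exact hm.append_right m'

theorem bind (A : Tr S) (P : ((S → ℕ → Bool) → (S → ℕ → Bool)) → Prop)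
    (h : ∀ a ∈ Lv A, ∃ U : Tr S, ∀ u ∈ Lv U, P (fun x => a (u x))) :
    ∃ B : Tr S, ∀ b ∈ Lv B, P b := by
  induction A generalizing P with
  | leaf => exact h _ (mem_leaf.2 rfl)
  | node s c ih =>
    have h1 : ∀ i, ∃ B : Tr S, ∀ b ∈ Lv B, P (fun x => e s i (b x)) := by
      intro i
      apply ih i (fun b => P (fun x => e s i (b x)))
      intro a ha
      exact h _ (mem_node.2 ⟨i, a, ha, rfl⟩)
    choose B hB using h1
    refine ⟨.node s B, ?_⟩
    rintro _ ⟨i, b, hb, rfl⟩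
    exact hB i b hb

theorem map_fst_perm (σ : Equiv.Perm S) (v : List (S × Bool)) :
    (v.map fun a => (σ a.1, a.2)).map Prod.fst = (v.map Prod.fst).map σ := by
  simp [Function.comp_def]

theorem uniform (hQ : ∀ f, f ∈ Q ↔ IsPiecewise (WreathSet S G) f) {f} (hf : f ∈ Q) :
    ∃ l : List S, ∀ w : List (S × Bool), w.map Prod.fst = l → ∃ w' : List (S × Bool), ∃ σ ∈ G,
      ∀ x, f (ew w x) = ew w' (perm σ x) := by
  choose w w' σ hσ hy h using locally_canonical hQ hf
  obtain ⟨t, ht⟩ := CompactSpace.elim_nhds_subcover (fun y => Set.range (ew (w y)))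
    (fun y => (isOpen_range_ew (w y)).1.mem_nhds (hy y))
  obtain ⟨l, hl⟩ := common t (fun y => (w y).map Prod.fst)
  refine ⟨l, fun r hr => ?_⟩
  have hz : ew r (fun _ _ => false) ∈ ⋃ y ∈ t, Set.range (ew (w y)) := by rw [ht]; trivial
  rw [Set.mem_iUnion₂] at hz
  obtain ⟨y, hyt, u, hu⟩ := hz
  obtain ⟨m, hm⟩ := hl y hyt
  obtain ⟨v, rfl, u', rfl⟩ := word_cover m u
  obtain ⟨r', hr', h2⟩ := reorder hm.symm (w y ++ v) (by simp)
  have hrr : r = r' := by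
    apply word_disj r r' (hr.trans hr'.symm) (x := fun _ _ => false) (y := u')
    rw [h2, ew_append, hu]
  subst hrr
  refine ⟨w' y ++ v.map (fun a => (σ y a.1, a.2)), σ y, hσ y, fun x => ?_⟩
  rw [h2, ew_append, h, perm_ew, ew_append]

theorem perfect [Nonempty S] (hQ : ∀ f, f ∈ Q ↔ IsPiecewise (WreathSet S G) f) {f} (hf : f ∈ Q) :
    f ∈ (⁅Q, Q⁆ : Subgroup _) := by
  obtain ⟨l, hl⟩ := uniform hQ hf
  have hl' : ∀ w : List (S × Bool), ∃ w' : List (S × Bool), ∃ σ, w.map Prod.fst = l → σ ∈ G ∧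
      ∀ x, f (ew w x) = ew w' (perm σ x) := by
    intro w
    by_cases hw : w.map Prod.fst = l
    · obtain ⟨w', σ, hσ, h⟩ := hl w hw
      exact ⟨w', σ, fun _ => ⟨hσ, h⟩⟩
    · exact ⟨[], 1, fun h => (hw h).elim⟩
  choose w' σ h using hl'
  obtain ⟨k, hk⟩ := common_word l (fun w => (w' w).map Prod.fst)
  obtain ⟨B, hB⟩ := bind (grid l)
    (fun b => ∃ k' ∈ Lv (grid k), ∃ σ ∈ G, ∀ x, f (b x) = k' (perm σ x)) (by
      intro a ha
      obtain ⟨w, hw, rfl⟩ := (mem_grid l a).1 ha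
      obtain ⟨m, hm⟩ := hk w hw
      obtain ⟨hσ, hfw⟩ := h w hw
      refine ⟨grid (m.map (σ w).symm), fun u hu => ?_⟩
      obtain ⟨v, hv, rfl⟩ := (mem_grid _ u).1 hu
      obtain ⟨r, hr, h2⟩ := reorder hm.symm (w' w ++ v.map (fun a => (σ w a.1, a.2))) (by
        rw [List.map_append, map_fst_perm, hv, List.map_map]
        congr 1
        simp [Function.comp_def])
      refine ⟨ew r, (mem_grid _ _).2 ⟨r, hr, rfl⟩, σ w, hσ, fun x => ?_⟩
      rw [hfw, h2, ew_append, perm_ew])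
  exact claim_tree hQ B (grid k) f hB

end

end TBT
/-!
Belk–Zaremsky (2022): for every nonempty countable set `S` and every group `G` of
permutations of `S`, the twisted Brin–Thompson group `SV_G` — the group of all
piecewise-`W` homeomorphisms of `𝔠^S`, where `W = (⊕_S V) ⋊ G` — is simple.
(Here the group `SV_G` is given as the subgroup of the homeomorphism group of
`𝔠^S` whose members are exactly the piecewise-`W` homeomorphisms.)
-/
theorem twisted_brin_thompson_is_simple (S : Type) [Countable S] [Nonempty S]
    (G : Subgroup (Equiv.Perm S))
    (Q : Subgroup ((S → ℕ → Bool) ≃ₜ (S → ℕ → Bool)))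
    (hQ : ∀ f, f ∈ Q ↔ IsPiecewise (WreathSet S G) f) :
    IsSimpleGroup ↥Q := by
  obtain ⟨s⟩ := ‹Nonempty S›
  have : Nonempty S := ⟨s⟩
  have hnt : ∃ x y : ↥Q, x ≠ y := by
    refine ⟨⟨TBT.tau s, TBT.tau_mem hQ s⟩, 1, fun h => ?_⟩
    have h1 : TBT.tau s = 1 := congrArg Subtype.val h
    have h2 : TBT.tau s (TBT.e s false fun _ _ => false) = TBT.e s false fun _ _ => false := by
      rw [h1]; rfl
    simp at h2
  refine { exists_pair_ne := hnt, eq_bot_or_eq_top_of_normal := ?_ }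
  intro N hN
  by_cases hbot : N = ⊥
  · exact Or.inl hbot
  right
  obtain ⟨n, hn, hn1⟩ : ∃ n : ↥Q, n ∈ N ∧ n ≠ 1 := by
    obtain ⟨a, ha⟩ := Subgroup.ne_bot_iff_exists_ne_one.1 hbot
    exact ⟨a.1, a.2, fun h => ha (Subtype.ext h)⟩
  have hM : ∀ m ∈ N.map Q.subtype, ∀ q ∈ Q, q * m * q⁻¹ ∈ N.map Q.subtype := by
    rintro _ ⟨m, hm, rfl⟩ q hq
    exact ⟨⟨q, hq⟩ * m * ⟨q, hq⟩⁻¹, hN.conj_mem m hm ⟨q, hq⟩, rfl⟩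
  have hle : (⁅Q, Q⁆ : Subgroup _) ≤ N.map Q.subtype := by
    rw [Subgroup.commutator_le]
    intro f hf g hg
    rw [commutatorElement_def]
    exact TBT.comm_mem hQ hM (n := (n : (S → ℕ → Bool) ≃ₜ (S → ℕ → Bool))) ⟨n, hn, rfl⟩
      (fun h => hn1 (Subtype.ext h)) hf hg
  rw [Subgroup.eq_top_iff']
  rintro ⟨f, hf⟩
  obtain ⟨m, hm, h⟩ := hle (TBT.perfect hQ hf)
  have : m = ⟨f, hf⟩ := Subtype.ext h
  rw [← this]
  exact hm
end

section
/- Any full group of homeomorphisms of a Cantor space acts oligomorphically on any one of its orbits: if X is a nonempty compact metrizable totally disconnected topological space without isolated points, H is a full group of homeomorphisms of X, x ∈ X, and O = {h(x) : h ∈ H} is the orbit of x, then for every k ≥ 1 the diagonal action of H on O^k has finitely many orbits. -/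
theorem swap_aux {X : Type*} [TopologicalSpace X] [CompactSpace X] [T2Space X]
    [TotallyDisconnectedSpace X] (H : Subgroup (X ≃ₜ X))
    (hfull : ∀ f : X ≃ₜ X, IsPiecewise (H : Set (X ≃ₜ X)) f → f ∈ H)
    (h : X ≃ₜ X) (hh : h ∈ H) (p : X) (hp : h p ≠ p) (F : Set X) (hF : F.Finite)
    (hpF : p ∉ F) (hqF : h p ∉ F) :
    ∃ g ∈ H, (g : X ≃ₜ X) p = h p ∧ ∀ y ∈ F, (g : X ≃ₜ X) y = y := by
  classical
  obtain ⟨A, B, hA, hB, hqA, hpB, hAB⟩ := t2_separation hp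
  have hW : IsOpen ((B ∩ h ⁻¹' A) ∩ (Fᶜ ∩ h ⁻¹' Fᶜ)) :=
    (hB.inter (hA.preimage h.continuous)).inter
      (hF.isClosed.isOpen_compl.inter (hF.isClosed.isOpen_compl.preimage h.continuous))
  obtain ⟨U, hU, hpU, hUW⟩ := compact_exists_isClopen_in_isOpen hW
    (show p ∈ _ from ⟨⟨hpB, hqA⟩, hpF, hqF⟩)
  have hdis : ∀ y ∈ U, h y ∉ U := fun y hy hy2 =>
    Set.disjoint_left.1 hAB (hUW hy).1.2 (hUW hy2).1.1
  set V : Set X := h.symm ⁻¹' U with hVdef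
  have hV : IsClopen V := hU.preimage h.symm.continuous
  have hUV : ∀ y ∈ U, y ∉ V := fun y hy hy2 => hdis _ hy2 (by simpa using hy)
  let f : X → X := fun y => if y ∈ U then h y else if y ∈ V then h.symm y else y
  have f1 : ∀ y ∈ U, f y = h y := fun y hy => by simp [f, hy]
  have f2 : ∀ y ∈ V, f y = h.symm y := fun y hy => by
    have : y ∉ U := fun h' => hUV y h' hy
    simp [f, hy, this]
  have f3 : ∀ y, y ∉ U → y ∉ V → f y = y := fun y h1 h2 => by simp [f, h1, h2]
  have hinv : Function.Involutive f := by
    intro y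
    by_cases h1 : y ∈ U
    · rw [f1 y h1, f2 (h y) (by simpa [hVdef] using h1)]; simp
    · by_cases h2 : y ∈ V
      · rw [f2 y h2, f1 _ h2]; simp
      · rw [f3 y h1 h2, f3 y h1 h2]
  have hcont : Continuous f := by
    refine Continuous.if ?_ h.continuous (Continuous.if ?_ h.symm.continuous continuous_id)
    · intro a ha
      have : frontier {x | x ∈ U} = ∅ := hU.frontier_eq
      rw [this] at ha; exact ha.elim
    · intro a ha
      have : frontier {x | x ∈ V} = ∅ := hV.frontier_eq
      rw [this] at ha; exact ha.elim
  let g : X ≃ₜ X := ⟨hinv.toPerm f, hcont, hcont⟩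
  have hg : ∀ y, g y = f y := fun y => rfl
  refine ⟨g, hfull g ⟨3, ![U, V, (U ∪ V)ᶜ], ?_, ?_, ?_, ?_⟩, ?_, ?_⟩
  · intro i
    fin_cases i
    · exact hU
    · exact hV
    · exact (hU.union hV).compl
  · ext y
    simp only [Set.mem_iUnion, Set.mem_univ, iff_true]
    by_cases h1 : y ∈ U
    · exact ⟨0, h1⟩
    · by_cases h2 : y ∈ V
      · exact ⟨1, h2⟩
      · exact ⟨2, fun h' => h'.elim h1 h2⟩
  · have d1 : Disjoint U V := Set.disjoint_left.2 hUV
    have d2 : Disjoint U (U ∪ V)ᶜ := Set.disjoint_left.2 fun y hy h' => h' (Or.inl hy)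
    have d3 : Disjoint V (U ∪ V)ᶜ := Set.disjoint_left.2 fun y hy h' => h' (Or.inr hy)
    intro i j hij
    fin_cases i <;> fin_cases j <;>
      first
      | exact absurd rfl hij
      | exact d1
      | exact d1.symm
      | exact d2
      | exact d2.symm
      | exact d3
      | exact d3.symm
  · intro i
    fin_cases i
    · exact ⟨h, hh, fun y hy => f1 y hy⟩
    · exact ⟨h⁻¹, H.inv_mem hh, fun y hy => f2 y hy⟩
    · exact ⟨1, H.one_mem, fun y hy =>
        f3 y (fun h' => hy (Or.inl h')) (fun h' => hy (Or.inr h'))⟩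
  · exact f1 p hpU
  · intro y hy
    refine f3 y (fun h' => (hUW h').2.1 hy) (fun h' => (hUW h').2.2 ?_)
    simpa using hy

/-!
Any full group of homeomorphisms of a Cantor space acts oligomorphically on any one
of its orbits: if `X` is a nonempty compact metrizable totally disconnected space
without isolated points, `H` is a full group of homeomorphisms of `X`, and `O` is
the `H`-orbit of a point `x`, then for every `k ≥ 1` the diagonal action of `H` on
`O^k` has finitely many orbits, i.e. some finite set of `k`-tuples from `O` meets
every `H`-orbit of `k`-tuples from `O`.
-/
theorem full_group_acts_oligomorphically_on_orbit (X : Type*) [TopologicalSpace X]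
    [Nonempty X] [CompactSpace X] [TopologicalSpace.MetrizableSpace X]
    [TotallyDisconnectedSpace X]
    (hiso : ∀ x : X, ¬ IsOpen ({x} : Set X))
    (H : Subgroup (X ≃ₜ X))
    (hfull : ∀ f : X ≃ₜ X, IsPiecewise (H : Set (X ≃ₜ X)) f → f ∈ H)
    (x : X) (k : ℕ) (hk : 1 ≤ k) :
    ∃ T : Finset (Fin k → X),
      (∀ t ∈ T, ∀ i, ∃ h ∈ H, (h : X ≃ₜ X) x = t i) ∧
      ∀ t : Fin k → X, (∀ i, ∃ h ∈ H, (h : X ≃ₜ X) x = t i) →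
        ∃ t' ∈ T, ∃ h ∈ H, ∀ i, (h : X ≃ₜ X) (t' i) = t i := by
  classical
  let O : Set (Fin k → X) := {t | ∀ i, ∃ h ∈ H, (h : X ≃ₜ X) x = t i}
  let K : (Fin k → X) → (Fin k → Fin k → Prop) := fun t i j => t i = t j
  obtain ⟨T, hTO, hTfin, hT⟩ : ∃ T ⊆ O, T.Finite ∧ K '' T = K '' O := by
    obtain ⟨T, hTO, hb⟩ := Set.SurjOn.exists_bijOn_subset (Set.surjOn_image K O)
    exact ⟨T, hTO, (hb.finite_iff_finite).2 (Set.toFinite _), hb.image_eq⟩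
  refine ⟨hTfin.toFinset, fun t ht => hTO (by simpa using ht), fun t ht => ?_⟩
  obtain ⟨t', ht', hK⟩ : K t ∈ K '' T := hT ▸ Set.mem_image_of_mem K ht
  refine ⟨t', by simpa using ht', ?_⟩
  have ht'O : ∀ i, ∃ h ∈ H, (h : X ≃ₜ X) x = t' i := hTO ht'
  have key : ∀ i j, t' i = t' j ↔ t i = t j := fun i j =>
    iff_of_eq (congrFun (congrFun hK i) j)
  suffices hs : ∀ s : Finset (Fin k), ∃ h ∈ H, ∀ i ∈ s, (h : X ≃ₜ X) (t' i) = t i by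
    obtain ⟨h, hh, h2⟩ := hs Finset.univ
    exact ⟨h, hh, fun i => h2 i (Finset.mem_univ i)⟩
  intro s
  induction s using Finset.induction_on with
  | empty => exact ⟨1, H.one_mem, by simp⟩
  | insert a s _ ih =>
    obtain ⟨h, hh, h2⟩ := ih
    by_cases hc : h (t' a) = t a
    · refine ⟨h, hh, fun i hi => ?_⟩
      rcases Finset.mem_insert.1 hi with rfl | hi
      · exact hc
      · exact h2 i hi
    · obtain ⟨u, hu, hu2⟩ := ht a
      obtain ⟨v, hv, hv2⟩ := ht'O a
      have hm : (u * v⁻¹ * h⁻¹) (h (t' a)) = t a := by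
        change u (v.symm (h.symm (h (t' a)))) = t a
        rw [← hu2, ← hv2]; simp
      obtain ⟨g, hg, hg1, hg2⟩ := swap_aux H hfull (u * v⁻¹ * h⁻¹)
        (H.mul_mem (H.mul_mem hu (H.inv_mem hv)) (H.inv_mem hh)) (h (t' a))
        (by rw [hm]; exact fun h' => hc h'.symm) (t '' (s : Set (Fin k))) (Set.toFinite _)
        (by
          rintro ⟨i, hi, hi2⟩
          rw [← h2 i hi] at hi2
          have e := (key i a).1 (h.injective hi2)
          exact hc (by rw [← hi2, h2 i hi, e]))
        (by
          rw [hm]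
          rintro ⟨i, hi, hi2⟩
          have e := (key i a).2 hi2
          exact hc (by rw [← e, h2 i hi, hi2]))
      refine ⟨g * h, H.mul_mem hg hh, fun i hi => ?_⟩
      change g (h (t' i)) = t i
      rcases Finset.mem_insert.1 hi with rfl | hi
      · rw [hg1, hm]
      · rw [h2 i hi]; exact hg2 _ ⟨i, hi, rfl⟩
end

section
/- Brouwer's characterization of the Cantor space: Every nonempty, compact, metrizable, totally disconnected topological space without isolated points is homeomorphic to the Cantor space 𝔠 = ℕ → Bool (with the product topology). -/
/-- A nonempty clopen set can be split in two nonempty clopen pieces, each decided by `C`. -/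
lemma cantor_split {X : Type*} [TopologicalSpace X] [TotallySeparatedSpace X]
    (hiso : ∀ x : X, ¬ IsOpen ({x} : Set X)) (C A : Set X) (hC : IsClopen C) :
    ∃ B : Set X, IsClopen A → A.Nonempty → IsClopen B ∧ (A ∩ B).Nonempty ∧ (A \ B).Nonempty ∧
      (∀ x ∈ A, ∀ y ∈ A, (x ∈ B ↔ y ∈ B) → (x ∈ C ↔ y ∈ C)) := by
  by_cases h : (A ∩ C).Nonempty ∧ (A \ C).Nonempty
  · exact ⟨C, fun _ _ => ⟨hC, h.1, h.2, fun x _ y _ h => h⟩⟩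
  by_cases hA : IsClopen A ∧ A.Nonempty
  swap
  · exact ⟨∅, fun h1 h2 => absurd ⟨h1, h2⟩ hA⟩
  obtain ⟨hA, a, ha⟩ := hA
  have hb : ∃ b ∈ A, b ≠ a := by
    by_contra! hb
    apply hiso a
    have : A = {a} := by
      ext z
      exact ⟨fun hz => hb z hz, fun hz => by rw [Set.mem_singleton_iff.1 hz]; exact ha⟩
    exact this ▸ hA.isOpen
  obtain ⟨b, hbA, hba⟩ := hb
  obtain ⟨B, hB, hbB, haB⟩ := exists_isClopen_of_totally_separated hba
  refine ⟨B, fun _ _ => ⟨hB, ⟨b, hbA, hbB⟩, ⟨a, ha, haB⟩, fun x hx y hy _ => ?_⟩⟩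
  constructor
  · intro hxC
    by_contra hyC
    exact h ⟨⟨x, hx, hxC⟩, ⟨y, hy, hyC⟩⟩
  · intro hyC
    by_contra hxC
    exact h ⟨⟨y, hy, hyC⟩, ⟨x, hx, hxC⟩⟩

/-- The clopen piece reached after following `s` for `n` steps. -/
def cantorPiece {X : Type*} (B : ℕ → Set X → Set X) (s : ℕ → Bool) : ℕ → Set X
  | 0 => Set.univ
  | n + 1 => {x | x ∈ cantorPiece B s n ∧ (x ∈ B n (cantorPiece B s n) ↔ s n = true)}

/-- The piece containing a given point at stage `n`. -/
def cantorAt {X : Type*} (B : ℕ → Set X → Set X) (x : X) : ℕ → Set X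
  | 0 => Set.univ
  | n + 1 => {y | y ∈ cantorAt B x n ∧ (y ∈ B n (cantorAt B x n) ↔ x ∈ B n (cantorAt B x n))}

open Classical in
/-- The address of a point. -/
noncomputable def cantorAddr {X : Type*} (B : ℕ → Set X → Set X) (x : X) (n : ℕ) : Bool :=
  decide (x ∈ B n (cantorAt B x n))

lemma cantorAt_eq {X : Type*} (B : ℕ → Set X → Set X) (x : X) (n : ℕ) :
    cantorPiece B (cantorAddr B x) n = cantorAt B x n := by
  induction n with
  | zero => rfl
  | succ n ih => simp [cantorPiece, cantorAt, ih, cantorAddr]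

lemma mem_cantorAt {X : Type*} (B : ℕ → Set X → Set X) (x : X) (n : ℕ) :
    x ∈ cantorAt B x n := by
  induction n with
  | zero => trivial
  | succ n ih => exact ⟨ih, Iff.rfl⟩

lemma cantorPiece_eq {X : Type*} (B : ℕ → Set X → Set X) (s : ℕ → Bool) (x : X) (n : ℕ)
    (h : x ∈ cantorPiece B s n) : cantorAt B x n = cantorPiece B s n := by
  induction n with
  | zero => rfl
  | succ n ih =>
    have h2 : x ∈ B n (cantorPiece B s n) ↔ s n = true := h.2
    simp only [cantorPiece, cantorAt, ih h.1, h2]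

lemma cantorAddr_eq {X : Type*} (B : ℕ → Set X → Set X) (s : ℕ → Bool) (x : X) (n : ℕ)
    (h : x ∈ cantorPiece B s (n + 1)) : cantorAddr B x n = s n := by
  have h2 : x ∈ B n (cantorPiece B s n) ↔ s n = true := h.2
  classical
  rw [Bool.eq_iff_iff, cantorAddr, decide_eq_true_iff, cantorPiece_eq B s x n h.1, h2]

/-!
Brouwer's characterization of the Cantor space: every nonempty, compact,
metrizable, totally disconnected topological space without isolated points is
homeomorphic to the Cantor space `ℕ → Bool` (with the product topology).
-/
theorem brouwer_characterization_of_cantor_space (X : Type*) [TopologicalSpace X]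
    [Nonempty X] [CompactSpace X] [TopologicalSpace.MetrizableSpace X]
    [TotallyDisconnectedSpace X]
    (hiso : ∀ x : X, ¬ IsOpen ({x} : Set X)) :
    Nonempty (X ≃ₜ (ℕ → Bool)) := by
  have : SecondCountableTopology X := by
    letI := TopologicalSpace.metrizableSpaceMetric X
    infer_instance
  have : Countable (TopologicalSpace.Clopens X) :=
    TopologicalSpace.Clopens.countable_iff_secondCountable.2 this
  obtain ⟨C, hCs⟩ := exists_surjective_nat (TopologicalSpace.Clopens X)
  choose B hB using fun (n : ℕ) (A : Set X) => cantor_split hiso (C n : Set X) A (C n).isClopen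
  have hP : ∀ s n, IsClopen (cantorPiece B s n) ∧ (cantorPiece B s n).Nonempty := by
    intro s n
    induction n with
    | zero => exact ⟨isClopen_univ, Set.univ_nonempty⟩
    | succ n ih =>
      obtain ⟨h1, h2, h3, -⟩ := hB n _ ih.1 ih.2
      cases hs : s n with
      | true =>
        have : cantorPiece B s (n + 1) = cantorPiece B s n ∩ B n (cantorPiece B s n) := by
          ext x; simp [cantorPiece, hs]
        rw [this]
        exact ⟨ih.1.inter h1, h2⟩
      | false =>
        have : cantorPiece B s (n + 1) = cantorPiece B s n \ B n (cantorPiece B s n) := by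
          ext x; simp [cantorPiece, hs]
        rw [this]
        exact ⟨ih.1.diff h1, h3⟩
  have hmem : ∀ x n, x ∈ cantorPiece B (cantorAddr B x) n := fun x n => by
    rw [cantorAt_eq]; exact mem_cantorAt B x n
  have hcont : Continuous (cantorAddr B) := by
    refine continuous_pi fun n => ?_
    refine (IsLocallyConstant.iff_exists_open _).2 (fun x => ?_) |>.continuous
    exact ⟨cantorPiece B (cantorAddr B x) (n + 1), (hP _ _).1.isOpen, hmem x _,
      fun y hy => cantorAddr_eq B _ y n hy⟩
  have hinj : Function.Injective (cantorAddr B) := by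
    intro x y hxy
    by_contra hne
    obtain ⟨U, hU, hxU, hyU⟩ := exists_isClopen_of_totally_separated hne
    obtain ⟨n, hn⟩ := hCs ⟨U, hU⟩
    have hx := hmem x (n + 1)
    have hy := hmem y (n + 1)
    rw [← hxy] at hy
    have h4 := (hB n _ (hP (cantorAddr B x) n).1 (hP _ n).2).2.2.2 x hx.1 y hy.1
      (hx.2.trans hy.2.symm)
    rw [hn] at h4
    exact hyU (h4.1 hxU)
  have hsurj : Function.Surjective (cantorAddr B) := by
    intro s
    obtain ⟨x, hx⟩ := IsCompact.nonempty_iInter_of_sequence_nonempty_isCompact_isClosed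
      (cantorPiece B s) (fun n x hx => hx.1) (fun n => (hP s n).2)
      (hP s 0).1.isClosed.isCompact (fun n => (hP s n).1.isClosed)
    rw [Set.mem_iInter] at hx
    exact ⟨x, funext fun n => cantorAddr_eq B s x n (hx _)⟩
  exact ⟨hcont.homeoOfEquivCompactToT2 (f := Equiv.ofBijective _ ⟨hinj, hsurj⟩)⟩
end
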